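/- arXiv:1402.6370 — 3 statements merged into one kernel-verified Lean document; each statement's English description precedes it below -/
import Mathlib

section
/- Let n ≥ 2, 1/2 < s < 1, and let L, C, η₀ > 0. Let u : ℝⁿ → ℝ be Lipschitz with constant L and semiconcave with constant C, and suppose u satisfies the ellipticity bound η₀ at a point x ∈ ℝⁿ. Let ε₁, …, εₙ > 0 with ∏_{j=1}^n εⱼ = 1. Then (1−s)·(1/2)·∫_{ℝⁿ} δ(u,x,y)/(∑_{j=1}^n εⱼ² yⱼ²)^{(n+2s)/2} dy ≥ (μ₀·ω_n/(2n))·∑_{j=1}^n εⱼ^{−2s}. -/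
open MeasureTheory

noncomputable def surfOmega (k : ℕ) : ℝ := 2 * Real.pi ^ ((k : ℝ) / 2) / Real.Gamma ((k : ℝ) / 2)

noncomputable def mu1 (s L C : ℝ) : ℝ := L ^ (2 - 2 * s) * (C / 2) ^ (2 * s - 1) / (2 * s - 1)

noncomputable def C1 (n : ℕ) (s L C : ℝ) : ℝ :=
  (Real.sqrt Real.pi * Real.Gamma (((n : ℝ) - 1) / 2 + s) / Real.Gamma ((n : ℝ) / 2 + s)) *
    (mu1 s L C * surfOmega (n - 1) / 2)

noncomputable def C2 (n : ℕ) (s : ℝ) : ℝ :=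
  surfOmega (n - 1) * Real.Gamma (((n : ℝ) - 1) / 2) * Real.Gamma (s + 1 / 2) /
    (2 * Real.Gamma ((n : ℝ) / 2 + s))

noncomputable def mu0 (n : ℕ) (s L C η₀ : ℝ) : ℝ :=
  C1 n s L C ^ (1 - (n : ℝ)) * (C2 n s)⁻¹ * (η₀ / 2) ^ (n : ℝ)

/-- Second-order increment `δ(u,x,y) = u(x+y) + u(x-y) - 2u(x)`. -/
noncomputable def delta2 {n : ℕ} (u : EuclideanSpace ℝ (Fin n) → ℝ)
    (x y : EuclideanSpace ℝ (Fin n)) : ℝ :=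
  u (x + y) + u (x - y) - 2 * u x

/-- Integrand `δ(u,x,y)/|A⁻¹ y|^(n+2s)`. -/
noncomputable def kernelA {n : ℕ} (s : ℝ) (A : Matrix (Fin n) (Fin n) ℝ)
    (u : EuclideanSpace ℝ (Fin n) → ℝ) (x y : EuclideanSpace ℝ (Fin n)) : ℝ :=
  delta2 u x y /
    ‖(EuclideanSpace.equiv (Fin n) ℝ).symm (A⁻¹.mulVec (EuclideanSpace.equiv (Fin n) ℝ y))‖ ^
      ((n : ℝ) + 2 * s)

/-- The linear operator `L_A u(x) = (1/2) ∫ δ(u,x,y)/|A⁻¹ y|^(n+2s) dy`. -/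
noncomputable def LA {n : ℕ} (s : ℝ) (A : Matrix (Fin n) (Fin n) ℝ)
    (u : EuclideanSpace ℝ (Fin n) → ℝ) (x : EuclideanSpace ℝ (Fin n)) : ℝ :=
  (1 / 2) * ∫ y, kernelA s A u x y

/-!
Fix a unit vector `e` and test the ellipticity bound with a matrix `A` of determinant one whose
inverse scales by `a` along `e` and by `b` on the orthogonal complement of `e`. Averaging over the
reflection `t e + z ↦ t e - z` and using the parallelogram identity for second increments bounds
`δ(u, x, t e + z)` by `δ(u, x, t e)` plus the modulus `min (C ‖z‖²) (2 L ‖z‖)`. Both parts of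
`L_A u(x)` can then be integrated explicitly, and choosing `b` so that the second part is `η₀ / 2`
gives `μ₀ ≤ (1 - s) ∫₀^∞ δ(u, x, r e) r ^ (-1 - 2 s) dr` for almost every `e`.

In polar coordinates this yields `(1 - s) L_A u(x) ≥ (μ₀ / 2) ∫_S ‖A⁻¹ σ‖ ^ (-n - 2 s) dσ` for
every admissible `A`. Since `det A = 1`, the change of variables `σ ↦ A σ / ‖A σ‖` on the sphere
turns the right-hand side into `(μ₀ / 2) ∫_S ‖A σ‖ ^ (2 s) dσ`. For diagonal `A`, concavity of
`t ↦ t ^ s` with the weights `σⱼ²` bounds the integrand below by a linear combination of the `σⱼ²`,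
each of which integrates to `ωₙ / n`.
-/

open Metric Set

section Polar

variable {F : Type*} [NormedAddCommGroup F]

theorem smul_homeomorphUnitSphereProd {E : Type*} [NormedAddCommGroup E] [NormedSpace ℝ E]
    (y : ({0}ᶜ : Set E)) :
    ((homeomorphUnitSphereProd E y).2 : ℝ) • ((homeomorphUnitSphereProd E y).1 : E) = y := by
  simp [smul_smul, norm_ne_zero_iff.2 y.2]

variable {E : Type*} [NormedAddCommGroup E] [NormedSpace ℝ E] [FiniteDimensional ℝ E]
  [MeasurableSpace E] [BorelSpace E] (μ : Measure E) [μ.IsAddHaarMeasure]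

theorem integrable_toSphere_prod_volumeIoiPow {f : E → F} (hf : Integrable f μ) :
    Integrable (fun q : sphere (0 : E) 1 × Ioi (0 : ℝ) => f ((q.2 : ℝ) • (q.1 : E)))
      (μ.toSphere.prod (.volumeIoiPow (Module.finrank ℝ E - 1))) := by
  rw [← μ.measurePreserving_homeomorphUnitSphereProd.integrable_comp_emb
    (Homeomorph.measurableEmbedding _)]
  simp only [Function.comp_def, smul_homeomorphUnitSphereProd]
  exact (integrableOn_iff_comap_subtypeVal (measurableSet_singleton 0).compl).1 hf.integrableOn

variable [NormedSpace ℝ F]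

theorem integrable_volumeIoiPow_iff (k : ℕ) (f : ℝ → F) :
    Integrable (fun r : Ioi (0 : ℝ) => f r) (Measure.volumeIoiPow k) ↔
      IntegrableOn (fun r : ℝ => r ^ k • f r) (Ioi 0) := by
  rw [integrableOn_iff_comap_subtypeVal measurableSet_Ioi, Measure.volumeIoiPow,
    integrable_withDensity_iff_integrable_smul' (by fun_prop) (by simp)]
  refine integrable_congr (.of_forall ?_)
  rintro ⟨r, hr : 0 < r⟩
  simp (disch := positivity) [ENNReal.toReal_ofReal]

theorem integral_volumeIoiPow (k : ℕ) (f : ℝ → F) :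
    ∫ r : Ioi (0 : ℝ), f r ∂Measure.volumeIoiPow k = ∫ r in Ioi (0 : ℝ), r ^ k • f r := by
  simp only [Measure.volumeIoiPow, ENNReal.ofReal]
  rw [integral_withDensity_eq_integral_smul
      (measurable_subtype_coe.pow_const _).real_toNNReal,
    integral_subtype_comap measurableSet_Ioi fun r => Real.toNNReal (r ^ k) • f r]
  refine setIntegral_congr_fun measurableSet_Ioi fun r hr => ?_
  simp only [NNReal.smul_def, Real.coe_toNNReal _ (pow_nonneg (mem_Ioi.1 hr).le _)]

theorem ae_integrableOn_polar {f : E → F} (hf : Integrable f μ) :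
    ∀ᵐ σ : sphere (0 : E) 1 ∂μ.toSphere,
      IntegrableOn (fun r : ℝ => r ^ (Module.finrank ℝ E - 1) • f (r • (σ : E))) (Ioi 0) := by
  filter_upwards [(integrable_toSphere_prod_volumeIoiPow μ hf).prod_right_ae] with σ hσ
  exact (integrable_volumeIoiPow_iff _ fun r => f (r • (σ : E))).1 hσ

theorem integrable_integral_polar {f : E → F} (hf : Integrable f μ) :
    Integrable (fun σ : sphere (0 : E) 1 =>
      ∫ r in Ioi (0 : ℝ), r ^ (Module.finrank ℝ E - 1) • f (r • (σ : E))) μ.toSphere :=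
  (integrable_toSphere_prod_volumeIoiPow μ hf).integral_prod_left.congr <|
    .of_forall fun σ => integral_volumeIoiPow _ fun r => f (r • (σ : E))

theorem integral_eq_integral_polar [Nontrivial E] {f : E → F} (hf : Integrable f μ) :
    ∫ y, f y ∂μ = ∫ σ : sphere (0 : E) 1,
      (∫ r in Ioi (0 : ℝ), r ^ (Module.finrank ℝ E - 1) • f (r • (σ : E))) ∂μ.toSphere :=
  calc
    ∫ y, f y ∂μ = ∫ y : ({0}ᶜ : Set E), f y ∂μ.comap (↑) := by
      rw [integral_subtype_comap (measurableSet_singleton _).compl f, restrict_compl_singleton]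
    _ = ∫ q : sphere (0 : E) 1 × Ioi (0 : ℝ), f ((q.2 : ℝ) • (q.1 : E))
          ∂μ.toSphere.prod (.volumeIoiPow (Module.finrank ℝ E - 1)) := by
      rw [← μ.measurePreserving_homeomorphUnitSphereProd.integral_comp
        (Homeomorph.measurableEmbedding _)]
      simp only [smul_homeomorphUnitSphereProd]
    _ = _ := by
      rw [integral_prod _ (integrable_toSphere_prod_volumeIoiPow μ hf)]
      exact integral_congr_ae <| .of_forall fun σ =>
        integral_volumeIoiPow _ fun r => f (r • (σ : E))

end Polar

section SphereChangeOfVariables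

variable {E F : Type*} [NormedAddCommGroup E] [NormedSpace ℝ E] [NormedAddCommGroup F]

/-- The degree-zero homogeneous extension of `φ` from the unit sphere, cut off to the closed unit
ball. Its volume integral is, up to the factor `dim E`, the integral of `φ` over the sphere. -/
noncomputable def unitBallExtension (φ : E → F) : E → F :=
  (closedBall 0 1).indicator fun z => φ (‖z‖⁻¹ • z)

theorem unitBallExtension_smul (φ : E → F) {w : E} (hw : w ≠ 0) {r : ℝ} (hr : 0 < r) :
    unitBallExtension φ (r • w) = (Iic ‖w‖⁻¹).indicator (fun _ => φ (‖w‖⁻¹ • w)) r := by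
  have hw' : 0 < ‖w‖ := norm_pos_iff.2 hw
  have hmem : r • w ∈ closedBall (0 : E) 1 ↔ r ∈ Iic ‖w‖⁻¹ := by
    rw [mem_closedBall_zero_iff, norm_smul, Real.norm_of_nonneg hr.le, mem_Iic,
      ← one_div, le_div_iff₀ hw']
  have hnormalize : ‖r • w‖⁻¹ • r • w = ‖w‖⁻¹ • w := by
    rw [norm_smul, Real.norm_of_nonneg hr.le, smul_smul]
    congr 1
    field_simp
  by_cases h : r ∈ Iic ‖w‖⁻¹
  · rw [unitBallExtension, indicator_of_mem (hmem.2 h), indicator_of_mem h, hnormalize]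
  · rw [unitBallExtension, indicator_of_notMem (hmem.not.2 h), indicator_of_notMem h]

theorem integral_Ioi_pow_smul_unitBallExtension [NormedSpace ℝ F] [CompleteSpace F] (k : ℕ)
    (φ : E → F) {w : E} (hw : w ≠ 0) :
    ∫ r in Ioi (0 : ℝ), r ^ k • unitBallExtension φ (r • w) =
      (‖w‖⁻¹ ^ (k + 1) / (k + 1)) • φ (‖w‖⁻¹ • w) := by
  have hray : ∀ r ∈ Ioi (0 : ℝ), r ^ k • unitBallExtension φ (r • w) =
      (Iic ‖w‖⁻¹).indicator (fun r => r ^ k • φ (‖w‖⁻¹ • w)) r := fun r hr => by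
    rw [unitBallExtension_smul φ hw hr, indicator_smul_apply]
  rw [setIntegral_congr_fun measurableSet_Ioi hray, setIntegral_indicator measurableSet_Iic,
    Ioi_inter_Iic, integral_smul_const, ← intervalIntegral.integral_of_le (by positivity),
    integral_pow, zero_pow k.succ_ne_zero, sub_zero]

variable [FiniteDimensional ℝ E] [MeasurableSpace E] [BorelSpace E] {μ : Measure E}
  [μ.IsAddHaarMeasure]

theorem integrable_unitBallExtension {φ : E → F} (hφ : Continuous φ) :
    Integrable (unitBallExtension φ) μ := by
  rw [unitBallExtension, integrable_indicator_iff measurableSet_closedBall]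
  obtain ⟨M, hM⟩ := (isCompact_closedBall (0 : E) 1).exists_bound_of_continuousOn hφ.continuousOn
  have hmeas : Measurable fun z : E => ‖z‖⁻¹ • z := by fun_prop
  refine Measure.integrableOn_of_bounded (M := M) measure_closedBall_lt_top.ne
    (hφ.comp_aestronglyMeasurable hmeas.aestronglyMeasurable) (.of_forall fun z => hM _ ?_)
  simpa [norm_smul] using inv_mul_le_one_of_le₀ le_rfl (norm_nonneg z)

variable [Nontrivial E] [NormedSpace ℝ F] [CompleteSpace F]

theorem integral_unitBallExtension_comp {T : E ≃L[ℝ] E} (hT : MeasurePreserving T μ μ)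
    {φ : E → F} (hφ : Continuous φ) :
    ∫ y, unitBallExtension φ (T y) ∂μ = (Module.finrank ℝ E : ℝ)⁻¹ •
      ∫ σ : sphere (0 : E) 1, ‖T σ‖⁻¹ ^ Module.finrank ℝ E • φ (‖T σ‖⁻¹ • T σ) ∂μ.toSphere := by
  have hint : Integrable (fun y => unitBallExtension φ (T y)) μ :=
    (hT.integrable_comp_emb T.toHomeomorph.measurableEmbedding).2
      (integrable_unitBallExtension hφ)
  have hdim : Module.finrank ℝ E - 1 + 1 = Module.finrank ℝ E :=
    Nat.sub_add_cancel Module.finrank_pos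
  rw [integral_eq_integral_polar μ hint, ← integral_smul]
  congr 1 with σ
  have hTσ : T σ ≠ 0 := by simp [ne_zero_of_mem_unit_sphere σ]
  simp only [map_smul]
  rw [integral_Ioi_pow_smul_unitBallExtension _ φ hTσ, hdim, ← Nat.cast_add_one, hdim, smul_smul,
    div_eq_inv_mul]

theorem integral_sphere_comp_normalize {T : E ≃L[ℝ] E} (hT : MeasurePreserving T μ μ)
    {φ : E → F} (hφ : Continuous φ) :
    ∫ σ : sphere (0 : E) 1, ‖T σ‖⁻¹ ^ Module.finrank ℝ E • φ (‖T σ‖⁻¹ • T σ) ∂μ.toSphere =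
      ∫ σ : sphere (0 : E) 1, φ σ ∂μ.toSphere := by
  have hdim : (Module.finrank ℝ E : ℝ)⁻¹ ≠ 0 :=
    inv_ne_zero (Nat.cast_ne_zero.2 Module.finrank_pos.ne')
  have hT' := integral_unitBallExtension_comp hT hφ
  have hid := integral_unitBallExtension_comp (T := .refl ℝ E) (.id μ) hφ
  rw [hT.integral_comp T.toHomeomorph.measurableEmbedding] at hT'
  simp only [ContinuousLinearEquiv.refl_apply, norm_eq_of_mem_sphere, inv_one, one_pow,
    one_smul] at hid
  exact smul_right_injective F hdim (hT'.symm.trans hid)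

theorem integral_sphere_rpow_norm_inv {T : E ≃L[ℝ] E} (hT : MeasurePreserving T μ μ) {p : ℝ}
    (hp : 0 ≤ p) :
    ∫ σ : sphere (0 : E) 1, ‖T.symm σ‖ ^ (-(Module.finrank ℝ E + p)) ∂μ.toSphere =
      ∫ σ : sphere (0 : E) 1, ‖T σ‖ ^ p ∂μ.toSphere := by
  have hsymm : MeasurePreserving T.symm μ μ :=
    hT.symm T.toHomeomorph.toMeasurableEquiv
  have hcont : Continuous fun y => ‖T y‖ ^ p :=
    T.continuous.norm.rpow_const fun _ => .inr hp
  rw [← integral_sphere_comp_normalize hsymm hcont]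
  congr 1 with σ
  have hσ : 0 < ‖T.symm σ‖ := norm_pos_iff.2 (by simp [ne_zero_of_mem_unit_sphere σ])
  simp only [map_smul, norm_smul, T.apply_symm_apply, norm_eq_of_mem_sphere, norm_inv, norm_norm,
    mul_one, smul_eq_mul]
  rw [Real.inv_rpow hσ.le, neg_add, Real.rpow_add hσ, Real.rpow_neg hσ.le, Real.rpow_natCast,
    Real.rpow_neg hσ.le, inv_pow]

end SphereChangeOfVariables

section SurfaceMeasure

theorem surfOmega_pos {k : ℕ} (hk : 0 < k) : 0 < surfOmega k := by
  have : 0 < Real.Gamma ((k : ℝ) / 2) := Real.Gamma_pos_of_pos (by positivity)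
  unfold surfOmega
  positivity

variable (V : Type*) [NormedAddCommGroup V] [InnerProductSpace ℝ V] [FiniteDimensional ℝ V]
  [MeasurableSpace V] [BorelSpace V] [Nontrivial V]

theorem toSphere_real_univ_eq_surfOmega :
    (volume : Measure V).toSphere.real univ = surfOmega (Module.finrank ℝ V) := by
  have hdim : (0 : ℝ) < Module.finrank ℝ V := by exact_mod_cast Module.finrank_pos
  have := Real.Gamma_pos_of_pos (half_pos hdim)
  rw [Measure.toSphere_real_apply_univ, measureReal_def, InnerProductSpace.volume_ball,
    surfOmega, Real.Gamma_add_one (half_pos hdim).ne', Real.sqrt_eq_rpow,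
    ← Real.rpow_mul_natCast Real.pi_pos.le, one_div_mul_eq_div]
  simp only [ENNReal.ofReal_one, one_pow, one_mul]
  rw [ENNReal.toReal_ofReal (by positivity)]
  field_simp

variable {V}

theorem integral_fun_norm_eq_surfOmega_mul (f : ℝ → ℝ) :
    ∫ z : V, f ‖z‖ = surfOmega (Module.finrank ℝ V) *
      ∫ r in Ioi (0 : ℝ), r ^ (Module.finrank ℝ V - 1) * f r := by
  rw [integral_fun_norm_addHaar volume f, ← toSphere_real_univ_eq_surfOmega,
    Measure.toSphere_real_apply_univ, nsmul_eq_mul, smul_eq_mul, mul_assoc]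
  simp only [smul_eq_mul]

end SurfaceMeasure

section SphereMoments

variable {ι : Type*} [Fintype ι]

theorem sum_sq_eq_one_of_mem_sphere (σ : sphere (0 : EuclideanSpace ℝ ι) 1) :
    ∑ i, (σ : EuclideanSpace ℝ ι) i ^ 2 = 1 := by
  rw [← EuclideanSpace.real_norm_sq_eq, norm_eq_of_mem_sphere, one_pow]

theorem integral_sphere_sq_coord_eq (i j : ι) :
    ∫ σ : sphere (0 : EuclideanSpace ℝ ι) 1, (σ : EuclideanSpace ℝ ι) i ^ 2 ∂volume.toSphere =
      ∫ σ : sphere (0 : EuclideanSpace ℝ ι) 1,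
        (σ : EuclideanSpace ℝ ι) j ^ 2 ∂volume.toSphere := by
  classical
  have : Nonempty ι := ⟨i⟩
  let T := LinearIsometryEquiv.piLpCongrLeft 2 ℝ ℝ (Equiv.swap i j)
  have hcont : Continuous fun y : EuclideanSpace ℝ ι => y j ^ 2 := by fun_prop
  have h := integral_sphere_comp_normalize (T := T.toContinuousLinearEquiv)
    T.measurePreserving hcont
  simpa [T, LinearIsometryEquiv.piLpCongrLeft_apply, Equiv.piCongrLeft'] using h

theorem integral_sphere_sq_coord (i : ι) :
    ∫ σ : sphere (0 : EuclideanSpace ℝ ι) 1, (σ : EuclideanSpace ℝ ι) i ^ 2 ∂volume.toSphere =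
      surfOmega (Fintype.card ι) / Fintype.card ι := by
  have : Nonempty ι := ⟨i⟩
  have hint (j : ι) : Integrable (fun σ : sphere (0 : EuclideanSpace ℝ ι) 1 =>
      (σ : EuclideanSpace ℝ ι) j ^ 2) volume.toSphere :=
    Continuous.integrable_of_hasCompactSupport (by fun_prop) (.of_compactSpace _)
  have hsum : ∑ j, ∫ σ : sphere (0 : EuclideanSpace ℝ ι) 1,
      (σ : EuclideanSpace ℝ ι) j ^ 2 ∂volume.toSphere = surfOmega (Fintype.card ι) := by
    rw [← integral_finsetSum _ fun j _ => hint j]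
    simp only [sum_sq_eq_one_of_mem_sphere, integral_const, smul_eq_mul, mul_one,
      toSphere_real_univ_eq_surfOmega, finrank_euclideanSpace]
  rw [Finset.sum_congr rfl fun j _ => integral_sphere_sq_coord_eq j i, Finset.sum_const,
    Finset.card_univ, nsmul_eq_mul] at hsum
  rw [← hsum, mul_div_cancel_left₀ _ (Nat.cast_ne_zero.2 Fintype.card_ne_zero)]

end SphereMoments

section MatrixAction

variable {ι : Type*} [Fintype ι] [DecidableEq ι]

/-- The action of an invertible matrix on Euclidean space as a continuous linear equivalence. -/
noncomputable def mulVecEquiv (A : Matrix ι ι ℝ) (hA : IsUnit A.det) :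
    EuclideanSpace ℝ ι ≃L[ℝ] EuclideanSpace ℝ ι :=
  (A.toLinearEquiv (PiLp.basisFun 2 ℝ ι) hA).toContinuousLinearEquiv

theorem mulVecEquiv_apply (A : Matrix ι ι ℝ) (hA : IsUnit A.det) (y : EuclideanSpace ℝ ι) :
    mulVecEquiv A hA y = WithLp.toLp 2 (A.mulVec y.ofLp) := by
  change Matrix.toLin (PiLp.basisFun 2 ℝ ι) (PiLp.basisFun 2 ℝ ι) A y = _
  rw [← Matrix.toLpLin_eq_toLin, Matrix.toLpLin_apply]

theorem mulVecEquiv_symm_apply (A : Matrix ι ι ℝ) (hA : IsUnit A.det)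
    (y : EuclideanSpace ℝ ι) :
    (mulVecEquiv A hA).symm y = WithLp.toLp 2 (A⁻¹.mulVec y.ofLp) := by
  change Matrix.toLin (PiLp.basisFun 2 ℝ ι) (PiLp.basisFun 2 ℝ ι) A⁻¹ y = _
  rw [← Matrix.toLpLin_eq_toLin, Matrix.toLpLin_apply]

theorem measurePreserving_mulVecEquiv {A : Matrix ι ι ℝ} (hA : IsUnit A.det)
    (hdet : A.det = 1) :
    MeasurePreserving (mulVecEquiv A hA) := by
  refine ⟨(mulVecEquiv A hA).continuous.measurable, ?_⟩
  have hdet' : LinearMap.det (Matrix.toLin (PiLp.basisFun 2 ℝ ι) (PiLp.basisFun 2 ℝ ι) A) = 1 := by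
    rw [LinearMap.det_toLin, hdet]
  have hmap := Measure.map_linearMap_addHaar_eq_smul_addHaar
    (volume : Measure (EuclideanSpace ℝ ι)) (hdet'.trans_ne one_ne_zero)
  rwa [hdet', inv_one, abs_one, ENNReal.ofReal_one, one_smul] at hmap

theorem sum_sq_mul_rpow_le_norm_diagonal_rpow {p : ℝ} (hp0 : 0 ≤ p) (hp2 : p ≤ 2) {d : ι → ℝ}
    (hd : ∀ i, 0 ≤ d i) (hA : IsUnit (Matrix.diagonal d).det)
    (σ : sphere (0 : EuclideanSpace ℝ ι) 1) :
    ∑ i, (σ : EuclideanSpace ℝ ι) i ^ 2 * d i ^ p ≤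
      ‖mulVecEquiv (Matrix.diagonal d) hA σ‖ ^ p := by
  have hnorm : ‖mulVecEquiv (Matrix.diagonal d) hA σ‖ =
      (∑ i, (σ : EuclideanSpace ℝ ι) i ^ 2 * d i ^ 2) ^ (1 / 2 : ℝ) := by
    rw [← Real.sqrt_eq_rpow, EuclideanSpace.norm_eq, mulVecEquiv_apply]
    simp [Matrix.mulVec_diagonal, mul_pow, mul_comm]
  have hjensen := (Real.concaveOn_rpow (p := p / 2) (by linarith) (by linarith)).le_map_sum
    (t := Finset.univ) (w := fun i => (σ : EuclideanSpace ℝ ι) i ^ 2) (p := fun i => d i ^ 2)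
    (fun i _ => sq_nonneg _) (sum_sq_eq_one_of_mem_sphere σ) fun i _ => sq_nonneg (d i)
  simp only [smul_eq_mul] at hjensen
  have hpow (i : ι) : (d i ^ 2) ^ (p / 2) = d i ^ p := by
    rw [← Real.rpow_natCast, ← Real.rpow_mul (hd i), Nat.cast_ofNat,
      mul_div_cancel₀ p two_ne_zero]
  simp only [hpow] at hjensen
  rwa [hnorm, ← Real.rpow_mul (Finset.sum_nonneg fun i _ => by positivity),
    one_div_mul_eq_div]

theorem surfOmega_div_mul_sum_rpow_le_integral_sphere [Nonempty ι] {p : ℝ} (hp0 : 0 ≤ p)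
    (hp2 : p ≤ 2) {d : ι → ℝ} (hd : ∀ i, 0 ≤ d i) (hA : IsUnit (Matrix.diagonal d).det) :
    surfOmega (Fintype.card ι) / Fintype.card ι * ∑ i, d i ^ p ≤
      ∫ σ : sphere (0 : EuclideanSpace ℝ ι) 1,
        ‖mulVecEquiv (Matrix.diagonal d) hA σ‖ ^ p ∂volume.toSphere := by
  have hint {f : sphere (0 : EuclideanSpace ℝ ι) 1 → ℝ} (hf : Continuous f) :
      Integrable f (volume : Measure (EuclideanSpace ℝ ι)).toSphere :=
    hf.integrable_of_hasCompactSupport (.of_compactSpace _)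
  calc
    surfOmega (Fintype.card ι) / Fintype.card ι * ∑ i, d i ^ p
      = ∑ i, (∫ σ : sphere (0 : EuclideanSpace ℝ ι) 1,
          (σ : EuclideanSpace ℝ ι) i ^ 2 ∂volume.toSphere) * d i ^ p := by
        simp only [integral_sphere_sq_coord, Finset.mul_sum]
    _ = ∫ σ : sphere (0 : EuclideanSpace ℝ ι) 1,
          ∑ i, (σ : EuclideanSpace ℝ ι) i ^ 2 * d i ^ p ∂volume.toSphere := by
        rw [integral_finsetSum _ fun i _ => hint (by fun_prop)]
        simp only [integral_mul_const]
    _ ≤ _ := integral_mono (hint (by fun_prop))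
        (hint (by fun_prop (disch := exact fun _ => .inr hp0)))
        fun σ => sum_sq_mul_rpow_le_norm_diagonal_rpow hp0 hp2 hd hA σ

end MatrixAction

section BracketIntegral

/-- The closed form `π ^ (d / 2) * Γ (p - d / 2) / Γ p` of the Japanese bracket integral
`∫ (1 + ‖y‖ ^ 2) ^ (-p)` over a Euclidean space of dimension `d < 2 * p`. The dimension is a real
parameter so that `n - 1` involves no truncated subtraction. -/
noncomputable def bracketIntegral (d p : ℝ) : ℝ :=
  Real.pi ^ (d / 2) * Real.Gamma (p - d / 2) / Real.Gamma p

theorem bracketIntegral_pos {d p : ℝ} (hd : 0 ≤ d) (hp : d < 2 * p) : 0 < bracketIntegral d p := by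
  have := Real.Gamma_pos_of_pos (show 0 < p by linarith)
  have := Real.Gamma_pos_of_pos (show 0 < p - d / 2 by linarith)
  unfold bracketIntegral
  positivity

theorem integral_Ioi_rpow_mul_exp_neg_mul {p c : ℝ} (hp : 0 < p) (hc : 0 < c) :
    ∫ t in Ioi (0 : ℝ), t ^ (p - 1) * Real.exp (-(c * t)) = Real.Gamma p * c ^ (-p) := by
  rw [Real.integral_rpow_mul_exp_neg_mul_Ioi hp hc, one_div, Real.inv_rpow hc.le,
    Real.rpow_neg hc.le, mul_comm]

theorem add_sq_rpow_neg_eq_mul_one_add_norm_sq_rpow {Y : Type*} [SeminormedAddCommGroup Y]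
    [NormedSpace ℝ Y] {a b : ℝ} (ha : 0 < a) (hb : 0 < b) (p : ℝ) (y : Y) :
    (a ^ 2 + b ^ 2 * ‖y‖ ^ 2) ^ (-p) =
      a ^ (-(2 * p)) * (1 + ‖(b / a) • y‖ ^ 2) ^ (-p) := by
  have hfactor : a ^ 2 + b ^ 2 * ‖y‖ ^ 2 = a ^ 2 * (1 + ‖(b / a) • y‖ ^ 2) := by
    rw [norm_smul, Real.norm_of_nonneg (by positivity)]
    field_simp
  rw [hfactor, Real.mul_rpow (by positivity) (by positivity), ← Real.rpow_natCast a 2,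
    ← Real.rpow_mul ha.le, Nat.cast_ofNat, mul_neg]

variable {Y : Type*} [NormedAddCommGroup Y] [InnerProductSpace ℝ Y] [FiniteDimensional ℝ Y]
  [MeasurableSpace Y] [BorelSpace Y]

theorem integrable_one_add_norm_sq_rpow {p : ℝ} (hp : Module.finrank ℝ Y < 2 * p) :
    Integrable fun y : Y => (1 + ‖y‖ ^ 2) ^ (-p) := by
  simpa [neg_div] using integrable_rpow_neg_one_add_norm_sq (μ := (volume : Measure Y)) hp

theorem integral_rpow_mul_exp_neg_one_add_norm_sq_mul (p : ℝ) {t : ℝ} (ht : 0 < t) :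
    ∫ y : Y, t ^ (p - 1) * Real.exp (-((1 + ‖y‖ ^ 2) * t)) =
      Real.pi ^ (Module.finrank ℝ Y / 2 : ℝ) *
        (t ^ (p - Module.finrank ℝ Y / 2 - 1) * Real.exp (-(1 * t))) := by
  have hsplit (y : Y) : t ^ (p - 1) * Real.exp (-((1 + ‖y‖ ^ 2) * t)) =
      t ^ (p - 1) * Real.exp (-(1 * t)) * Real.exp (-t * ‖y‖ ^ 2) := by
    rw [mul_assoc, ← Real.exp_add]
    ring_nf
  simp only [hsplit]
  rw [integral_const_mul, GaussianFourier.integral_rexp_neg_mul_sq_norm ht,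
    Real.div_rpow Real.pi_pos.le ht.le, sub_right_comm, Real.rpow_sub ht (p - 1)]
  ring

theorem integrable_prod_rpow_mul_exp_neg_one_add_norm_sq_mul {p : ℝ}
    (hp : Module.finrank ℝ Y < 2 * p) :
    Integrable (fun q : Y × ℝ => q.2 ^ (p - 1) * Real.exp (-((1 + ‖q.1‖ ^ 2) * q.2)))
      (volume.prod (volume.restrict (Ioi 0))) := by
  have hp0 : 0 < p := by linarith [(Module.finrank ℝ Y).cast_nonneg (α := ℝ)]
  have hgamma (y : Y) := integral_Ioi_rpow_mul_exp_neg_mul hp0 (c := 1 + ‖y‖ ^ 2) (by positivity)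
  have hmeas : Measurable fun q : Y × ℝ =>
      q.2 ^ (p - 1) * Real.exp (-((1 + ‖q.1‖ ^ 2) * q.2)) := by fun_prop
  refine (integrable_prod_iff hmeas.aestronglyMeasurable).2 ⟨.of_forall fun y => ?_, ?_⟩
  · refine .of_integral_ne_zero ?_
    have := Real.Gamma_pos_of_pos hp0
    rw [hgamma]
    positivity
  · refine ((integrable_one_add_norm_sq_rpow hp).const_mul (Real.Gamma p)).congr
      (.of_forall fun y => ?_)
    dsimp only
    rw [← hgamma]
    refine setIntegral_congr_fun measurableSet_Ioi fun t (ht : 0 < t) => ?_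
    exact (Real.norm_of_nonneg (by positivity)).symm

theorem integral_one_add_norm_sq_rpow {p : ℝ} (hp : Module.finrank ℝ Y < 2 * p) :
    ∫ y : Y, (1 + ‖y‖ ^ 2) ^ (-p) = bracketIntegral (Module.finrank ℝ Y) p := by
  have hp0 : 0 < p := by linarith [(Module.finrank ℝ Y).cast_nonneg (α := ℝ)]
  have hswap : Real.Gamma p * ∫ y : Y, (1 + ‖y‖ ^ 2) ^ (-p) =
      Real.pi ^ (Module.finrank ℝ Y / 2 : ℝ) * Real.Gamma (p - Module.finrank ℝ Y / 2) :=
    calc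
      Real.Gamma p * ∫ y : Y, (1 + ‖y‖ ^ 2) ^ (-p)
        = ∫ y : Y, ∫ t in Ioi (0 : ℝ), t ^ (p - 1) * Real.exp (-((1 + ‖y‖ ^ 2) * t)) := by
          rw [← integral_const_mul]
          congr 1 with y
          rw [integral_Ioi_rpow_mul_exp_neg_mul hp0 (by positivity)]
      _ = ∫ t in Ioi (0 : ℝ), ∫ y : Y, t ^ (p - 1) * Real.exp (-((1 + ‖y‖ ^ 2) * t)) :=
          integral_integral_swap (integrable_prod_rpow_mul_exp_neg_one_add_norm_sq_mul hp)
      _ = _ := by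
          rw [setIntegral_congr_fun measurableSet_Ioi fun t ht =>
              integral_rpow_mul_exp_neg_one_add_norm_sq_mul p ht, integral_const_mul,
            integral_Ioi_rpow_mul_exp_neg_mul (by linarith) one_pos, Real.one_rpow, mul_one]
  rw [bracketIntegral, ← hswap, mul_div_cancel_left₀ _ (Real.Gamma_pos_of_pos hp0).ne']

theorem integrable_add_mul_norm_sq_rpow {a b p : ℝ} (ha : 0 < a) (hb : 0 < b)
    (hp : Module.finrank ℝ Y < 2 * p) :
    Integrable fun y : Y => (a ^ 2 + b ^ 2 * ‖y‖ ^ 2) ^ (-p) := by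
  simp only [add_sq_rpow_neg_eq_mul_one_add_norm_sq_rpow ha hb]
  exact ((integrable_one_add_norm_sq_rpow hp).comp_smul (by positivity)).const_mul _

theorem integral_add_mul_norm_sq_rpow {a b p : ℝ} (ha : 0 < a) (hb : 0 < b)
    (hp : Module.finrank ℝ Y < 2 * p) :
    ∫ y : Y, (a ^ 2 + b ^ 2 * ‖y‖ ^ 2) ^ (-p) = bracketIntegral (Module.finrank ℝ Y) p *
      b ^ (-(Module.finrank ℝ Y : ℝ)) * a ^ (Module.finrank ℝ Y - 2 * p) := by
  simp only [add_sq_rpow_neg_eq_mul_one_add_norm_sq_rpow ha hb]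
  rw [integral_const_mul, Measure.integral_comp_smul volume fun y : Y => (1 + ‖y‖ ^ 2) ^ (-p),
    integral_one_add_norm_sq_rpow hp, abs_of_pos (by positivity), smul_eq_mul, div_pow, inv_div,
    sub_eq_add_neg, Real.rpow_add ha, Real.rpow_neg hb.le, Real.rpow_natCast, Real.rpow_natCast]
  ring

/-- The kernel `(a² ‖x‖² + b² ‖y‖²) ^ (-p)` on `X × Y`, which is `‖A⁻¹ ·‖ ^ (-2 p)` when `A⁻¹`
scales the first factor by `a` and the second one by `b`. -/
noncomputable def biaxialKernel {X Y : Type*} [Norm X] [Norm Y] (a b p : ℝ) (q : X × Y) : ℝ :=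
  (a ^ 2 * ‖q.1‖ ^ 2 + b ^ 2 * ‖q.2‖ ^ 2) ^ (-p)

theorem biaxialKernel_nonneg {X Y : Type*} [Norm X] [Norm Y] (a b p : ℝ) (q : X × Y) :
    0 ≤ biaxialKernel a b p q := by
  unfold biaxialKernel
  positivity

theorem biaxialKernel_swap {X Y : Type*} [Norm X] [Norm Y] (a b p : ℝ) (q : X × Y) :
    biaxialKernel b a p q.swap = biaxialKernel a b p q := by
  simp only [biaxialKernel, Prod.fst_swap, Prod.snd_swap, add_comm]

variable {X : Type*} [NormedAddCommGroup X] [NormedSpace ℝ X] [FiniteDimensional ℝ X]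
  [MeasurableSpace X] [BorelSpace X] [Nontrivial X] {μ : Measure X} [μ.IsAddHaarMeasure]
  {a b p : ℝ}

theorem integrable_mul_biaxialKernel (ha : 0 < a) (hb : 0 < b)
    (hp : Module.finrank ℝ Y < 2 * p) {h : X → ℝ} (hmeas : AEStronglyMeasurable h μ)
    (hint : Integrable (fun x => h x * ‖x‖ ^ (Module.finrank ℝ Y - 2 * p)) μ) :
    Integrable (fun q : X × Y => h q.1 * biaxialKernel a b p q)
      (μ.prod volume) := by
  have hmeas' : AEStronglyMeasurable (fun q : X × Y => h q.1 * biaxialKernel a b p q)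
      (μ.prod volume) :=
    hmeas.comp_fst.mul (Measurable.aestronglyMeasurable (by unfold biaxialKernel; fun_prop))
  have hne : ∀ᵐ x ∂μ, x ≠ 0 := Measure.ae_ne μ 0
  refine (integrable_prod_iff hmeas').2 ⟨?_, ?_⟩
  · filter_upwards [hne] with x hx
    have hx' := mul_pos ha (norm_pos_iff.2 hx)
    simpa only [biaxialKernel, mul_pow] using
      (integrable_add_mul_norm_sq_rpow hx' hb hp).const_mul (h x)
  · refine (hint.norm.const_mul (bracketIntegral (Module.finrank ℝ Y) p *
      b ^ (-(Module.finrank ℝ Y : ℝ)) * a ^ (Module.finrank ℝ Y - 2 * p))).congr ?_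
    filter_upwards [hne] with x hx
    have hx' := mul_pos ha (norm_pos_iff.2 hx)
    have hnorm (y : Y) : ‖h x * biaxialKernel a b p (x, y)‖ =
        |h x| * ((a * ‖x‖) ^ 2 + b ^ 2 * ‖y‖ ^ 2) ^ (-p) := by
      rw [norm_mul, Real.norm_eq_abs, Real.norm_of_nonneg (biaxialKernel_nonneg ..),
        biaxialKernel, mul_pow]
    simp only [hnorm]
    rw [integral_const_mul, integral_add_mul_norm_sq_rpow hx' hb hp,
      Real.mul_rpow ha.le (norm_nonneg x), norm_mul, Real.norm_eq_abs,
      Real.norm_of_nonneg (by positivity)]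
    ring

theorem integral_mul_biaxialKernel (ha : 0 < a) (hb : 0 < b)
    (hp : Module.finrank ℝ Y < 2 * p) {h : X → ℝ} (hmeas : AEStronglyMeasurable h μ)
    (hint : Integrable (fun x => h x * ‖x‖ ^ (Module.finrank ℝ Y - 2 * p)) μ) :
    ∫ q : X × Y, h q.1 * biaxialKernel a b p q ∂μ.prod volume =
      bracketIntegral (Module.finrank ℝ Y) p * b ^ (-(Module.finrank ℝ Y : ℝ)) *
        a ^ (Module.finrank ℝ Y - 2 * p) * ∫ x, h x * ‖x‖ ^ (Module.finrank ℝ Y - 2 * p) ∂μ := by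
  rw [integral_prod _ (integrable_mul_biaxialKernel ha hb hp hmeas hint),
    ← integral_const_mul]
  refine integral_congr_ae ?_
  filter_upwards [Measure.ae_ne μ 0] with x hx
  rw [integral_const_mul]
  simp only [biaxialKernel, ← mul_pow a]
  rw [integral_add_mul_norm_sq_rpow (mul_pos ha (norm_pos_iff.2 hx)) hb hp,
    Real.mul_rpow ha.le (norm_nonneg x)]
  ring

end BracketIntegral

section OrthogonalSplitting

variable {E : Type*} [NormedAddCommGroup E] [InnerProductSpace ℝ E] [FiniteDimensional ℝ E]

theorem finrank_orthogonal_span_singleton_of_norm_eq_one {e : E} (he : ‖e‖ = 1) :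
    Module.finrank ℝ (ℝ ∙ e)ᗮ + 1 = Module.finrank ℝ E := by
  have he0 : e ≠ 0 := norm_ne_zero_iff.1 (he.trans_ne one_ne_zero)
  rw [← (ℝ ∙ e).finrank_add_finrank_orthogonal, finrank_span_singleton he0, add_comm]

variable [MeasurableSpace E] [BorelSpace E]

/-- Coordinates `(t, z) ↦ t • e + z` on `E` adapted to a unit vector `e`. -/
noncomputable def axisSplit (e : E) (he : ‖e‖ = 1) : ℝ × (ℝ ∙ e)ᗮ ≃ᵐ E :=
  ((LinearIsometryEquiv.toSpanUnitSingleton e he).toHomeomorph.toMeasurableEquiv.prodCongr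
    (.refl _)).trans <|
  (MeasurableEquiv.toLp 2 ((ℝ ∙ e) × (ℝ ∙ e)ᗮ)).trans
    (ℝ ∙ e).orthogonalDecomposition.symm.toHomeomorph.toMeasurableEquiv

theorem axisSplit_apply (e : E) (he : ‖e‖ = 1) (q : ℝ × (ℝ ∙ e)ᗮ) :
    axisSplit e he q = q.1 • e + q.2 := by
  change (ℝ ∙ e).orthogonalDecomposition.symm
    (WithLp.toLp 2 (LinearIsometryEquiv.toSpanUnitSingleton e he q.1, q.2)) = _
  simp

theorem measurePreserving_axisSplit (e : E) (he : ‖e‖ = 1) :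
    MeasurePreserving (axisSplit e he) (volume.prod volume) volume :=
  (ℝ ∙ e).orthogonalDecomposition.symm.measurePreserving.comp <|
    (WithLp.volume_preserving_toLp _ _).comp <|
      (LinearIsometryEquiv.toSpanUnitSingleton e he).measurePreserving.prod (.id volume)

end OrthogonalSplitting

section UniaxialMatrix

theorem dotProduct_ofLp_eq_inner {ι : Type*} [Fintype ι] (x y : EuclideanSpace ℝ ι) :
    x.ofLp ⬝ᵥ y.ofLp = inner ℝ x y := by
  rw [EuclideanSpace.inner_eq_star_dotProduct, star_trivial, dotProduct_comm]

theorem dotProduct_ofLp_self_of_norm_eq_one {ι : Type*} [Fintype ι] {e : EuclideanSpace ℝ ι}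
    (he : ‖e‖ = 1) : e.ofLp ⬝ᵥ e.ofLp = 1 := by
  rw [dotProduct_ofLp_eq_inner, real_inner_self_eq_norm_sq, he, one_pow]

variable {ι : Type*} [DecidableEq ι]

/-- The symmetric matrix that scales by `α` along the unit vector `e` and by `β` on the orthogonal
complement of `e`. -/
def uniaxialMatrix (e : ι → ℝ) (α β : ℝ) : Matrix ι ι ℝ :=
  β • 1 + (α - β) • Matrix.vecMulVec e e

theorem isHermitian_uniaxialMatrix (e : ι → ℝ) (α β : ℝ) :
    (uniaxialMatrix e α β).IsHermitian := by
  ext i j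
  simp [uniaxialMatrix, Matrix.vecMulVec_apply, Matrix.one_apply, eq_comm, mul_comm]

theorem uniaxialMatrix_one_one (e : ι → ℝ) : uniaxialMatrix e 1 1 = 1 := by
  simp [uniaxialMatrix]

variable [Fintype ι] {e : ι → ℝ}

theorem uniaxialMatrix_mul_uniaxialMatrix (he : e ⬝ᵥ e = 1) (α β α' β' : ℝ) :
    uniaxialMatrix e α β * uniaxialMatrix e α' β' = uniaxialMatrix e (α * α') (β * β') := by
  have hproj : Matrix.vecMulVec e e * Matrix.vecMulVec e e = Matrix.vecMulVec e e := by
    rw [Matrix.vecMulVec_mul_vecMulVec, he, one_smul]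
  simp only [uniaxialMatrix, add_mul, mul_add, smul_mul_smul_comm, hproj, mul_one, one_mul]
  module

theorem uniaxialMatrix_inv (he : e ⬝ᵥ e = 1) {α β : ℝ} (hα : α ≠ 0) (hβ : β ≠ 0) :
    (uniaxialMatrix e α β)⁻¹ = uniaxialMatrix e α⁻¹ β⁻¹ :=
  Matrix.inv_eq_right_inv <| by
    rw [uniaxialMatrix_mul_uniaxialMatrix he, mul_inv_cancel₀ hα, mul_inv_cancel₀ hβ,
      uniaxialMatrix_one_one]

theorem posDef_uniaxialMatrix (he : e ⬝ᵥ e = 1) {α β : ℝ} (hα : 0 < α) (hβ : 0 < β) :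
    (uniaxialMatrix e α β).PosDef := by
  have hsqrt : uniaxialMatrix e α β =
      (uniaxialMatrix e √α √β).conjTranspose * uniaxialMatrix e √α √β := by
    rw [(isHermitian_uniaxialMatrix e _ _).eq, uniaxialMatrix_mul_uniaxialMatrix he,
      Real.mul_self_sqrt hα.le, Real.mul_self_sqrt hβ.le]
  have hunit : IsUnit (uniaxialMatrix e √α √β) :=
    .of_mul_eq_one (uniaxialMatrix e (√α)⁻¹ (√β)⁻¹) <| by
      rw [uniaxialMatrix_mul_uniaxialMatrix he, mul_inv_cancel₀ (Real.sqrt_pos.2 hα).ne',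
        mul_inv_cancel₀ (Real.sqrt_pos.2 hβ).ne', uniaxialMatrix_one_one]
  rw [hsqrt]
  exact .conjTranspose_mul_self _ (Matrix.mulVec_injective_iff_isUnit.2 hunit)

theorem det_uniaxialMatrix (he : e ⬝ᵥ e = 1) (α : ℝ) {β : ℝ} (hβ : β ≠ 0) :
    (uniaxialMatrix e α β).det = α * β ^ (Fintype.card ι - 1) := by
  have : Nonempty ι := by
    by_contra! hempty
    simp [dotProduct] at he
  have hrank_one : uniaxialMatrix e α β = β • (1 + Matrix.replicateCol Unit ((α / β - 1) • e) *
      Matrix.replicateRow Unit e) := by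
    rw [← Matrix.vecMulVec_eq, Matrix.smul_vecMulVec, smul_add, smul_smul, mul_sub,
      mul_div_cancel₀ α hβ, mul_one, uniaxialMatrix]
  rw [hrank_one, Matrix.det_smul, Matrix.det_one_add_replicateCol_mul_replicateRow,
    dotProduct_smul, he, smul_eq_mul, mul_one, add_sub_cancel,
    ← Nat.sub_add_cancel (Fintype.card_pos (α := ι)), pow_succ, Nat.add_sub_cancel]
  field_simp

theorem uniaxialMatrix_mulVec_smul_add {e : EuclideanSpace ℝ ι} (he : ‖e‖ = 1) (α β t : ℝ)
    (z : (ℝ ∙ e)ᗮ) :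
    WithLp.toLp 2 ((uniaxialMatrix e.ofLp α β).mulVec (t • e + z : EuclideanSpace ℝ ι).ofLp) =
      (α * t) • e + β • (z : EuclideanSpace ℝ ι) := by
  have hdot : e.ofLp ⬝ᵥ (t • e + z : EuclideanSpace ℝ ι).ofLp = t := by
    rw [dotProduct_ofLp_eq_inner, inner_add_right, inner_smul_right,
      real_inner_self_eq_norm_sq, he, Submodule.mem_orthogonal_singleton_iff_inner_right.1 z.2]
    ring
  ext i
  simp only [uniaxialMatrix, Matrix.add_mulVec, Matrix.smul_mulVec, Matrix.one_mulVec,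
    Matrix.vecMulVec_mulVec, hdot, PiLp.add_apply, PiLp.smul_apply, Pi.add_apply, Pi.smul_apply,
    MulOpposite.smul_eq_mul_unop, MulOpposite.unop_op, smul_eq_mul]
  ring

theorem norm_uniaxialMatrix_mulVec_sq {e : EuclideanSpace ℝ ι} (he : ‖e‖ = 1) (α β t : ℝ)
    (z : (ℝ ∙ e)ᗮ) :
    ‖WithLp.toLp 2 ((uniaxialMatrix e.ofLp α β).mulVec
      (t • e + z : EuclideanSpace ℝ ι).ofLp)‖ ^ 2 = α ^ 2 * ‖t‖ ^ 2 + β ^ 2 * ‖z‖ ^ 2 := by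
  rw [uniaxialMatrix_mulVec_smul_add he, norm_add_sq_real, norm_smul, norm_smul, he,
    inner_smul_left, inner_smul_right, Submodule.mem_orthogonal_singleton_iff_inner_right.1 z.2]
  simp [mul_pow]

end UniaxialMatrix

section FracMoment

/-- `h` is integrable against `r ^ (-1 - 2 * s)` on the half-line. -/
def FracIntegrable (s : ℝ) (h : ℝ → ℝ) : Prop :=
  IntegrableOn (fun r : ℝ => h r * r ^ (-1 - 2 * s)) (Ioi 0)

/-- The integral of `h` against `r ^ (-1 - 2 * s)` on the half-line. For the second increment `h` of
a function on a line it is, up to a constant, the one-dimensional fractional Laplacian of order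
`2 * s`. Like every Bochner integral it is `0` unless `FracIntegrable s h`. -/
noncomputable def fracMoment (s : ℝ) (h : ℝ → ℝ) : ℝ :=
  ∫ r in Ioi (0 : ℝ), h r * r ^ (-1 - 2 * s)

/-- The bound for the second increments of an `L`-Lipschitz, `C`-semiconcave function at distance
`r`. -/
noncomputable def semiconcaveModulus (L C r : ℝ) : ℝ := min (C * r ^ 2) (2 * L * r)

theorem measurable_semiconcaveModulus (L C : ℝ) : Measurable (semiconcaveModulus L C) := by
  unfold semiconcaveModulus
  fun_prop

variable {s L C r : ℝ}

theorem semiconcaveModulus_mul_rpow_of_mem_Ioc (hC : 0 < C) (hr : r ∈ Ioc 0 (2 * L / C)) :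
    semiconcaveModulus L C r * r ^ (-1 - 2 * s) = C * r ^ (1 - 2 * s) := by
  have hle : C * r ^ 2 ≤ 2 * L * r := by
    nlinarith [(le_div_iff₀ hC).1 hr.2, hr.1]
  rw [semiconcaveModulus, min_eq_left hle, mul_assoc, ← Real.rpow_natCast, ← Real.rpow_add hr.1]
  push_cast
  ring_nf

theorem semiconcaveModulus_mul_rpow_of_mem_Ioi (hL : 0 < L) (hC : 0 < C)
    (hr : r ∈ Ioi (2 * L / C)) :
    semiconcaveModulus L C r * r ^ (-1 - 2 * s) = 2 * L * r ^ (-(2 * s)) := by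
  have hr0 : 0 < r := lt_trans (by positivity) (mem_Ioi.1 hr)
  have hle : 2 * L * r ≤ C * r ^ 2 := by
    nlinarith [(div_lt_iff₀ hC).1 (mem_Ioi.1 hr)]
  have hexp : -1 - 2 * s = -(2 * s) - 1 := by ring
  rw [semiconcaveModulus, min_eq_right hle, hexp, Real.rpow_sub_one hr0.ne']
  field_simp

theorem integrableOn_Ioc_semiconcaveModulus (hs1 : s < 1) (hC : 0 < C) :
    IntegrableOn (fun r : ℝ => semiconcaveModulus L C r * r ^ (-1 - 2 * s))
      (Ioc 0 (2 * L / C)) := by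
  refine (integrableOn_congr_fun (fun r hr => semiconcaveModulus_mul_rpow_of_mem_Ioc hC hr)
    measurableSet_Ioc).2 ?_
  exact ((intervalIntegral.intervalIntegrable_rpow' (by linarith)).1).const_mul C

theorem integrableOn_Ioi_semiconcaveModulus (hs : 1 / 2 < s) (hL : 0 < L) (hC : 0 < C) :
    IntegrableOn (fun r : ℝ => semiconcaveModulus L C r * r ^ (-1 - 2 * s))
      (Ioi (2 * L / C)) := by
  refine (integrableOn_congr_fun (fun r hr => semiconcaveModulus_mul_rpow_of_mem_Ioi hL hC hr)
    measurableSet_Ioi).2 ?_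
  exact (integrableOn_Ioi_rpow_of_lt (by linarith) (by positivity)).const_mul (2 * L)

theorem fracIntegrable_semiconcaveModulus (hs : 1 / 2 < s) (hs1 : s < 1) (hL : 0 < L)
    (hC : 0 < C) : FracIntegrable s (semiconcaveModulus L C) := by
  have hunion : Ioi (0 : ℝ) = Ioc 0 (2 * L / C) ∪ Ioi (2 * L / C) :=
    (Ioc_union_Ioi_eq_Ioi (by positivity)).symm
  rw [FracIntegrable, hunion]
  exact (integrableOn_Ioc_semiconcaveModulus hs1 hC).union
    (integrableOn_Ioi_semiconcaveModulus hs hL hC)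

theorem mu1_eq_mul_rpow (hL : 0 < L) (hC : 0 < C) :
    mu1 s L C = L * (2 * L / C) ^ (1 - 2 * s) / (2 * s - 1) := by
  have hexpL : 2 - 2 * s = 1 + (1 - 2 * s) := by ring
  have hexpC : 2 * s - 1 = -(1 - 2 * s) := by ring
  have hradius : 2 * L / C = L / (C / 2) := by field_simp
  rw [mu1, hradius, Real.div_rpow hL.le (by positivity), hexpL, Real.rpow_add hL, Real.rpow_one]
  nth_rw 1 [hexpC]
  rw [Real.rpow_neg (by positivity)]
  ring

theorem integral_Ioc_semiconcaveModulus (hs1 : s < 1) (hL : 0 < L) (hC : 0 < C) :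
    ∫ r in Ioc 0 (2 * L / C), semiconcaveModulus L C r * r ^ (-1 - 2 * s) =
      L * (2 * L / C) ^ (1 - 2 * s) / (1 - s) := by
  have hR : 0 < 2 * L / C := by positivity
  have hexp : 1 - 2 * s + 1 = 2 * (1 - s) := by ring
  rw [setIntegral_congr_fun measurableSet_Ioc fun r hr =>
      semiconcaveModulus_mul_rpow_of_mem_Ioc hC hr,
    integral_const_mul, ← intervalIntegral.integral_of_le hR.le,
    integral_rpow (.inl (by linarith)), Real.zero_rpow (by linarith), Real.rpow_add_one hR.ne',
    hexp]
  field_simp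
  ring

theorem integral_Ioi_semiconcaveModulus (hs : 1 / 2 < s) (hL : 0 < L) (hC : 0 < C) :
    ∫ r in Ioi (2 * L / C), semiconcaveModulus L C r * r ^ (-1 - 2 * s) =
      2 * L * (2 * L / C) ^ (1 - 2 * s) / (2 * s - 1) := by
  have hexp : -(2 * s) + 1 = 1 - 2 * s := by ring
  rw [setIntegral_congr_fun measurableSet_Ioi fun r hr =>
      semiconcaveModulus_mul_rpow_of_mem_Ioi hL hC hr,
    integral_const_mul, integral_Ioi_rpow_of_lt (by linarith) (by positivity), hexp,
    neg_div, ← div_neg, neg_sub]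
  ring

theorem one_sub_mul_fracMoment_semiconcaveModulus (hs : 1 / 2 < s) (hs1 : s < 1) (hL : 0 < L)
    (hC : 0 < C) : (1 - s) * fracMoment s (semiconcaveModulus L C) = mu1 s L C := by
  have hnear : 1 - s ≠ 0 := by linarith
  have hfar : 2 * s - 1 ≠ 0 := by linarith
  rw [fracMoment, ← Ioc_union_Ioi_eq_Ioi (show 0 ≤ 2 * L / C by positivity),
    setIntegral_union (Ioc_disjoint_Ioi le_rfl) measurableSet_Ioi
      (integrableOn_Ioc_semiconcaveModulus hs1 hC)
      (integrableOn_Ioi_semiconcaveModulus hs hL hC),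
    integral_Ioc_semiconcaveModulus hs1 hL hC, integral_Ioi_semiconcaveModulus hs hL hC,
    mu1_eq_mul_rpow hL hC, div_add_div _ _ hnear hfar, ← mul_div_assoc,
    mul_div_mul_left _ _ hnear]
  ring

end FracMoment

section Constants

theorem mu1_pos {s L C : ℝ} (hs : 1 / 2 < s) (hL : 0 < L) (hC : 0 < C) : 0 < mu1 s L C := by
  have : 0 < 2 * s - 1 := by linarith
  unfold mu1
  positivity

theorem C1_eq_bracketIntegral (n : ℕ) (s L C : ℝ) :
    C1 n s L C = bracketIntegral 1 (n / 2 + s) * (mu1 s L C * surfOmega (n - 1) / 2) := by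
  rw [C1, bracketIntegral, Real.sqrt_eq_rpow]
  ring_nf

theorem C2_eq_bracketIntegral {n : ℕ} (hn : 2 ≤ n) (s : ℝ) :
    C2 n s = bracketIntegral (n - 1) (n / 2 + s) := by
  have hn' : (2 : ℝ) ≤ n := by exact_mod_cast hn
  have hΓ : Real.Gamma (((n : ℝ) - 1) / 2) ≠ 0 := (Real.Gamma_pos_of_pos (by linarith)).ne'
  have hexp : (n : ℝ) / 2 + s - (n - 1) / 2 = s + 1 / 2 := by ring
  rw [C2, bracketIntegral, surfOmega, Nat.cast_pred (by lia), hexp]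
  field_simp

theorem C1_pos {n : ℕ} (hn : 2 ≤ n) {s L C : ℝ} (hs : 1 / 2 < s) (hL : 0 < L) (hC : 0 < C) :
    0 < C1 n s L C := by
  have hn' : (2 : ℝ) ≤ n := by exact_mod_cast hn
  have := mu1_pos hs hL hC
  have := surfOmega_pos (k := n - 1) (by lia)
  have := bracketIntegral_pos (d := 1) (p := n / 2 + s) one_pos.le (by linarith)
  rw [C1_eq_bracketIntegral]
  positivity

theorem C2_pos {n : ℕ} (hn : 2 ≤ n) {s : ℝ} (hs : 0 ≤ s) : 0 < C2 n s := by
  have hn' : (2 : ℝ) ≤ n := by exact_mod_cast hn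
  rw [C2_eq_bracketIntegral hn]
  exact bracketIntegral_pos (by linarith) (by linarith)

theorem mu0_eq_pow {n : ℕ} (hn : 1 ≤ n) {s L C : ℝ} (hC1 : 0 ≤ C1 n s L C) (η₀ : ℝ) :
    mu0 n s L C η₀ = (C1 n s L C ^ (n - 1))⁻¹ * (C2 n s)⁻¹ * (η₀ / 2) ^ (n - 1 + 1) := by
  rw [mu0, Nat.sub_add_cancel hn, Real.rpow_natCast, ← neg_sub, ← Nat.cast_pred hn,
    Real.rpow_neg hC1, Real.rpow_natCast]

theorem mu0_nonneg {n : ℕ} (hn : 2 ≤ n) {s L C η₀ : ℝ} (hs : 1 / 2 < s) (hL : 0 < L) (hC : 0 < C)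
    (hη : 0 ≤ η₀) : 0 ≤ mu0 n s L C η₀ := by
  have := C1_pos hn hs hL hC
  have := C2_pos (s := s) hn (by linarith)
  unfold mu0
  positivity

theorem inv_pow_mul_inv_mul_pow_le_of_forall_le {m : ℕ} {s c₁ c₂ η Φ : ℝ} (hs : 0 < s)
    (hc₁ : 0 < c₁) (hc₂ : 0 < c₂) (hη : 0 < η)
    (h : ∀ a b : ℝ, 0 < a → 0 < b → a * b ^ m = 1 →
      η ≤ c₂ * a ^ (-(2 * s)) * Φ + c₁ * b ^ (-(2 * s))) :
    (c₁ ^ m)⁻¹ * c₂⁻¹ * (η / 2) ^ (m + 1) ≤ Φ := by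
  -- The weight `b` is chosen so that the second term absorbs half of `η`.
  obtain ⟨b, hb, hbs⟩ : ∃ b : ℝ, 0 < b ∧ b ^ (-(2 * s)) = η / 2 / c₁ :=
    ⟨(η / 2 / c₁) ^ (-(2 * s))⁻¹, by positivity,
      Real.rpow_inv_rpow (by positivity) (by linarith)⟩
  have has : ((b ^ m)⁻¹) ^ (-(2 * s)) = ((η / 2 / c₁) ^ m)⁻¹ := by
    rw [Real.inv_rpow (by positivity), ← hbs, ← Real.rpow_natCast, ← Real.rpow_natCast,
      ← Real.rpow_mul hb.le, ← Real.rpow_mul hb.le, mul_comm]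
  have hhalf : η / 2 ≤ c₂ * ((η / 2 / c₁) ^ m)⁻¹ * Φ := by
    have hab := h (b ^ m)⁻¹ b (by positivity) hb (inv_mul_cancel₀ (by positivity))
    rw [hbs, has, mul_div_cancel₀ _ hc₁.ne'] at hab
    linarith
  calc
    (c₁ ^ m)⁻¹ * c₂⁻¹ * (η / 2) ^ (m + 1) = (η / 2) / (c₂ * ((η / 2 / c₁) ^ m)⁻¹) := by
      rw [div_pow (η / 2) c₁, pow_succ (η / 2)]
      field_simp
    _ ≤ Φ := (div_le_iff₀' (by positivity)).2 hhalf

end Constants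

section Radial

theorem pow_sub_one_mul_rpow_neg_sub {k : ℕ} (hk : 0 < k) (s : ℝ) {r : ℝ} (hr : 0 < r) :
    r ^ (k - 1) * r ^ (-(k : ℝ) - 2 * s) = r ^ (-1 - 2 * s) := by
  rw [← Real.rpow_natCast, ← Real.rpow_add hr, Nat.cast_pred hk]
  ring_nf

variable {X Y : Type*} [NormedAddCommGroup X] [InnerProductSpace ℝ X] [FiniteDimensional ℝ X]
  [MeasurableSpace X] [BorelSpace X] [Nontrivial X]
  [NormedAddCommGroup Y] [InnerProductSpace ℝ Y] [FiniteDimensional ℝ Y]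
  [MeasurableSpace Y] [BorelSpace Y] {s a b p : ℝ} {h : ℝ → ℝ}

theorem FracIntegrable.integrable_comp_norm (hh : FracIntegrable s h) :
    Integrable fun x : X => h ‖x‖ * ‖x‖ ^ (-(Module.finrank ℝ X : ℝ) - 2 * s) := by
  refine (integrable_fun_norm_addHaar volume
    (f := fun r => h r * r ^ (-(Module.finrank ℝ X : ℝ) - 2 * s))).2 ?_
  refine hh.congr_fun (fun r hr => ?_) measurableSet_Ioi
  dsimp only
  rw [smul_eq_mul, mul_left_comm, pow_sub_one_mul_rpow_neg_sub Module.finrank_pos s hr]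

theorem integral_comp_norm_mul_rpow_eq_fracMoment (s : ℝ) (h : ℝ → ℝ) :
    ∫ x : X, h ‖x‖ * ‖x‖ ^ (-(Module.finrank ℝ X : ℝ) - 2 * s) =
      surfOmega (Module.finrank ℝ X) * fracMoment s h := by
  rw [integral_fun_norm_eq_surfOmega_mul fun r => h r * r ^ (-(Module.finrank ℝ X : ℝ) - 2 * s)]
  congr 1
  refine setIntegral_congr_fun measurableSet_Ioi fun r hr => ?_
  rw [mul_left_comm, pow_sub_one_mul_rpow_neg_sub Module.finrank_pos s hr]

theorem integrable_comp_norm_fst_mul_biaxialKernel (hs : 0 ≤ s) (ha : 0 < a) (hb : 0 < b)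
    (hp : 2 * p = Module.finrank ℝ X + Module.finrank ℝ Y + 2 * s) (hmeas : Measurable h)
    (hh : FracIntegrable s h) :
    Integrable fun q : X × Y => h ‖q.1‖ * biaxialKernel a b p q := by
  have hX : (0 : ℝ) < Module.finrank ℝ X := by exact_mod_cast Module.finrank_pos
  have hexp : Module.finrank ℝ Y - 2 * p = -(Module.finrank ℝ X : ℝ) - 2 * s := by linarith
  refine integrable_mul_biaxialKernel (h := fun x => h ‖x‖) ha hb (by linarith)
    (hmeas.comp measurable_norm).aestronglyMeasurable ?_
  simpa only [hexp] using hh.integrable_comp_norm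

theorem integral_comp_norm_fst_mul_biaxialKernel (hs : 0 ≤ s) (ha : 0 < a) (hb : 0 < b)
    (hab : a ^ Module.finrank ℝ X * b ^ Module.finrank ℝ Y = 1)
    (hp : 2 * p = Module.finrank ℝ X + Module.finrank ℝ Y + 2 * s) (hmeas : Measurable h)
    (hh : FracIntegrable s h) :
    ∫ q : X × Y, h ‖q.1‖ * biaxialKernel a b p q =
      bracketIntegral (Module.finrank ℝ Y) p * a ^ (-(2 * s)) *
        (surfOmega (Module.finrank ℝ X) * fracMoment s h) := by
  have hX : (0 : ℝ) < Module.finrank ℝ X := by exact_mod_cast Module.finrank_pos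
  have hexp : Module.finrank ℝ Y - 2 * p = -(Module.finrank ℝ X : ℝ) - 2 * s := by linarith
  have hscale : b ^ (-(Module.finrank ℝ Y : ℝ)) * a ^ (-(Module.finrank ℝ X : ℝ) - 2 * s) =
      a ^ (-(2 * s)) := by
    rw [Real.rpow_neg hb.le, Real.rpow_natCast, inv_eq_of_mul_eq_one_left hab,
      ← Real.rpow_natCast, ← Real.rpow_add ha]
    ring_nf
  have hint := hh.integrable_comp_norm (X := X)
  rw [← hexp] at hint
  rw [Measure.volume_eq_prod, integral_mul_biaxialKernel (h := fun x => h ‖x‖) ha hb (by linarith)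
      (hmeas.comp measurable_norm).aestronglyMeasurable hint,
    mul_assoc (bracketIntegral _ _), hexp, hscale, integral_comp_norm_mul_rpow_eq_fracMoment]

theorem integrable_comp_norm_snd_mul_biaxialKernel (hs : 0 ≤ s) (ha : 0 < a) (hb : 0 < b)
    (hp : 2 * p = Module.finrank ℝ X + Module.finrank ℝ Y + 2 * s) (hmeas : Measurable h)
    (hh : FracIntegrable s h) :
    Integrable fun q : Y × X => h ‖q.2‖ * biaxialKernel b a p q := by
  refine (integrable_comp_norm_fst_mul_biaxialKernel (X := X) (Y := Y) hs ha hb hp hmeas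
    hh).swap.congr (.of_forall fun q => ?_)
  simp only [Function.comp_apply, biaxialKernel_swap, Prod.fst_swap]

theorem integral_comp_norm_snd_mul_biaxialKernel (hs : 0 ≤ s) (ha : 0 < a) (hb : 0 < b)
    (hab : a ^ Module.finrank ℝ X * b ^ Module.finrank ℝ Y = 1)
    (hp : 2 * p = Module.finrank ℝ X + Module.finrank ℝ Y + 2 * s) (hmeas : Measurable h)
    (hh : FracIntegrable s h) :
    ∫ q : Y × X, h ‖q.2‖ * biaxialKernel b a p q =
      bracketIntegral (Module.finrank ℝ Y) p * a ^ (-(2 * s)) *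
        (surfOmega (Module.finrank ℝ X) * fracMoment s h) := by
  rw [← integral_comp_norm_fst_mul_biaxialKernel hs ha hb hab hp hmeas hh,
    Measure.volume_eq_prod, Measure.volume_eq_prod, ← integral_prod_swap]
  simp only [biaxialKernel_swap, Prod.snd_swap]

end Radial

section SecondIncrement

theorem continuous_of_abs_sub_le {E : Type*} [SeminormedAddCommGroup E] {u : E → ℝ} {L : ℝ}
    (hLip : ∀ a b, |u a - u b| ≤ L * ‖a - b‖) : Continuous u :=
  (LipschitzWith.of_dist_le' (K := L) fun a b => by
    simpa only [dist_eq_norm, Real.norm_eq_abs] using hLip a b).continuous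

variable {n : ℕ} {u : EuclideanSpace ℝ (Fin n) → ℝ}

theorem delta2_neg (u : EuclideanSpace ℝ (Fin n) → ℝ) (x y : EuclideanSpace ℝ (Fin n)) :
    delta2 u x (-y) = delta2 u x y := by
  rw [delta2, delta2, ← sub_eq_add_neg, sub_neg_eq_add, add_comm (u (x - y))]

theorem delta2_norm_smul (u : EuclideanSpace ℝ (Fin n) → ℝ) (x e : EuclideanSpace ℝ (Fin n))
    (t : ℝ) : delta2 u x (‖t‖ • e) = delta2 u x (t • e) := by
  rcases abs_choice t with ht | ht <;> rw [Real.norm_eq_abs, ht]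
  rw [neg_smul, delta2_neg]

theorem delta2_add_add_delta2_sub (u : EuclideanSpace ℝ (Fin n) → ℝ)
    (x w z : EuclideanSpace ℝ (Fin n)) :
    delta2 u x (w + z) + delta2 u x (w - z) =
      2 * delta2 u x w + delta2 u (x + w) z + delta2 u (x - w) z := by
  simp only [delta2, ← add_assoc, ← sub_sub, ← add_sub_assoc, sub_add]
  ring_nf

theorem delta2_le_semiconcaveModulus {L C : ℝ} (hLip : ∀ a b, |u a - u b| ≤ L * ‖a - b‖)
    (hSC : ∀ a b, delta2 u a b ≤ C * ‖b‖ ^ 2) (x y : EuclideanSpace ℝ (Fin n)) :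
    delta2 u x y ≤ semiconcaveModulus L C ‖y‖ := by
  refine le_min (hSC x y) ?_
  have hadd := (le_abs_self _).trans (hLip (x + y) x)
  have hsub := (le_abs_self _).trans (hLip (x - y) x)
  rw [add_sub_cancel_left] at hadd
  rw [sub_sub_cancel_left, norm_neg] at hsub
  rw [delta2]
  linarith

theorem measurable_delta2 (hu : Measurable u) (x : EuclideanSpace ℝ (Fin n)) :
    Measurable (delta2 u x) := by
  unfold delta2
  fun_prop

end SecondIncrement

theorem integral_le_of_add_comp_le {α : Type*} [MeasurableSpace α] {μ : Measure α} {T : α ≃ᵐ α}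
    (hT : MeasurePreserving T μ μ) {f g : α → ℝ} (hf : Integrable f μ) (hg : Integrable g μ)
    (hfg : ∀ a, f a + f (T a) ≤ 2 * g a) : ∫ a, f a ∂μ ≤ ∫ a, g a ∂μ := by
  have hfT : Integrable (fun a => f (T a)) μ :=
    (hT.integrable_comp_emb T.measurableEmbedding).2 hf
  have hmono := integral_mono (hf.add hfT) (hg.const_mul 2) hfg
  rw [integral_add' hf hfT, hT.integral_comp', integral_const_mul] at hmono
  linarith

section DirectionalBound

theorem surfOmega_one : surfOmega 1 = 2 := by
  rw [surfOmega, Nat.cast_one, Real.Gamma_one_half_eq, ← Real.sqrt_eq_rpow,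
    mul_div_cancel_right₀ _ (by positivity)]

variable {n : ℕ} {s a b p : ℝ} {u : EuclideanSpace ℝ (Fin n) → ℝ} {x e : EuclideanSpace ℝ (Fin n)}

theorem kernelA_uniaxialMatrix_axisSplit (he : ‖e‖ = 1) (ha : 0 < a) (hb : 0 < b)
    (q : ℝ × (ℝ ∙ e)ᗮ) :
    kernelA s (uniaxialMatrix e.ofLp a⁻¹ b⁻¹) u x (axisSplit e he q) =
      delta2 u x (q.1 • e + q.2) * biaxialKernel a b (n / 2 + s) q := by
  have he' := dotProduct_ofLp_self_of_norm_eq_one he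
  have hnorm := norm_uniaxialMatrix_mulVec_sq he a b q.1 q.2
  rw [kernelA, uniaxialMatrix_inv he' (by positivity) (by positivity), inv_inv, inv_inv,
    axisSplit_apply, biaxialKernel, ← hnorm, ← Real.rpow_natCast, ← Real.rpow_mul (norm_nonneg _),
    div_eq_mul_inv, ← Real.rpow_neg (norm_nonneg _)]
  congr 2
  push_cast
  ring

theorem delta2_add_mul_biaxialKernel_add_reflect_le {ω : ℝ → ℝ}
    (hω : ∀ y z, delta2 u y z ≤ ω ‖z‖) (q : ℝ × (ℝ ∙ e)ᗮ) :
    delta2 u x (q.1 • e + q.2) * biaxialKernel a b p q +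
        delta2 u x (q.1 • e + (-q.2 : (ℝ ∙ e)ᗮ)) * biaxialKernel a b p (q.1, -q.2) ≤
      2 * (delta2 u x (‖q.1‖ • e) * biaxialKernel a b p q +
        ω ‖q.2‖ * biaxialKernel a b p q) := by
  have hreflect : biaxialKernel a b p (q.1, -q.2) = biaxialKernel a b p q := by
    simp only [biaxialKernel, norm_neg]
  have hadd := hω (x + q.1 • e) q.2
  have hsub := hω (x - q.1 • e) q.2
  have hpar := delta2_add_add_delta2_sub u x (q.1 • e) q.2
  rw [hreflect, delta2_norm_smul, Submodule.coe_neg, ← sub_eq_add_neg, ← add_mul, ← add_mul,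
    ← mul_assoc]
  refine mul_le_mul_of_nonneg_right ?_ (biaxialKernel_nonneg ..)
  rw [Submodule.coe_norm]
  linarith

theorem integral_delta2_add_mul_biaxialKernel_le [Nontrivial (ℝ ∙ e)ᗮ] (hs : 0 ≤ s) (ha : 0 < a)
    (hb : 0 < b) (hab : a * b ^ Module.finrank ℝ (ℝ ∙ e)ᗮ = 1)
    (hp : 2 * p = Module.finrank ℝ (ℝ ∙ e)ᗮ + 1 + 2 * s) (hu : Measurable u) {ω : ℝ → ℝ}
    (hω : Measurable ω) (hωs : FracIntegrable s ω) (huω : ∀ y z, delta2 u y z ≤ ω ‖z‖)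
    (hfrac : FracIntegrable s fun r => delta2 u x (r • e))
    (hint : Integrable fun q : ℝ × (ℝ ∙ e)ᗮ =>
      delta2 u x (q.1 • e + q.2) * biaxialKernel a b p q) :
    ∫ q : ℝ × (ℝ ∙ e)ᗮ, delta2 u x (q.1 • e + q.2) * biaxialKernel a b p q ≤
      bracketIntegral (Module.finrank ℝ (ℝ ∙ e)ᗮ) p * a ^ (-(2 * s)) *
          (2 * fracMoment s fun r => delta2 u x (r • e)) +
        bracketIntegral 1 p * b ^ (-(2 * s)) *
          (surfOmega (Module.finrank ℝ (ℝ ∙ e)ᗮ) * fracMoment s ω) := by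
  have hmeas : Measurable fun r : ℝ => delta2 u x (r • e) :=
    (measurable_delta2 hu x).comp (by fun_prop)
  have hdim : (Module.finrank ℝ ℝ : ℝ) = 1 := by simp
  have haxial := integrable_comp_norm_fst_mul_biaxialKernel (X := ℝ) (Y := (ℝ ∙ e)ᗮ) hs ha hb
    (p := p) (by linarith) hmeas hfrac
  have htransverse := integrable_comp_norm_snd_mul_biaxialKernel (X := (ℝ ∙ e)ᗮ) (Y := ℝ) hs hb ha
    (p := p) (by linarith) hω hωs
  have haxial_eq := integral_comp_norm_fst_mul_biaxialKernel (X := ℝ) (Y := (ℝ ∙ e)ᗮ) hs ha hb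
    (p := p) (by simpa using hab) (by linarith) hmeas hfrac
  have htransverse_eq := integral_comp_norm_snd_mul_biaxialKernel (X := (ℝ ∙ e)ᗮ) (Y := ℝ) hs hb
    ha (p := p) (by simpa [mul_comm] using hab) (by linarith) hω hωs
  have hreflect : MeasurePreserving
      ((MeasurableEquiv.refl ℝ).prodCongr (MeasurableEquiv.neg (ℝ ∙ e)ᗮ)) volume volume :=
    (MeasurePreserving.id volume).prod (Measure.measurePreserving_neg volume)
  refine (integral_le_of_add_comp_le hreflect hint (haxial.add htransverse)
    fun q => delta2_add_mul_biaxialKernel_add_reflect_le huω q).trans_eq ?_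
  rw [integral_add' haxial htransverse, haxial_eq, htransverse_eq, Module.finrank_self,
    surfOmega_one, Nat.cast_one]

/-- The ellipticity bound `η₀` at `x`: over the positive definite `A` of determinant `1`, the
operators `(1 - s) L_A u(x)` are defined by convergent integrals and are at least `η₀`. -/
def EllipticityBound (s η₀ : ℝ) (u : EuclideanSpace ℝ (Fin n) → ℝ)
    (x : EuclideanSpace ℝ (Fin n)) : Prop :=
  ∀ A : Matrix (Fin n) (Fin n) ℝ, A.PosDef → A.det = 1 →
    Integrable (fun y => kernelA s A u x y) ∧ η₀ ≤ (1 - s) * LA s A u x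

variable {L C η₀ : ℝ}

theorem EllipticityBound.le_of_delta2_le (hell : EllipticityBound s η₀ u x) (hn : 2 ≤ n)
    (hs : 0 ≤ s) (hs1 : s ≤ 1) (hu : Measurable u) {ω : ℝ → ℝ} (hω : Measurable ω)
    (hωs : FracIntegrable s ω) (huω : ∀ y z, delta2 u y z ≤ ω ‖z‖) (he : ‖e‖ = 1)
    (hfrac : FracIntegrable s fun r => delta2 u x (r • e)) (ha : 0 < a) (hb : 0 < b)
    (hab : a * b ^ (n - 1) = 1) :
    η₀ ≤ (1 - s) * (1 / 2 * (bracketIntegral (n - 1) (n / 2 + s) * a ^ (-(2 * s)) *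
        (2 * fracMoment s fun r => delta2 u x (r • e)) +
      bracketIntegral 1 (n / 2 + s) * b ^ (-(2 * s)) * (surfOmega (n - 1) * fracMoment s ω))) := by
  have he' := dotProduct_ofLp_self_of_norm_eq_one he
  have hdim : Module.finrank ℝ (ℝ ∙ e)ᗮ = n - 1 := Nat.eq_sub_of_add_eq <| by
    rw [finrank_orthogonal_span_singleton_of_norm_eq_one he, finrank_euclideanSpace_fin]
  have hcast : ((n - 1 : ℕ) : ℝ) = n - 1 := Nat.cast_pred (by lia)
  have : Nontrivial (ℝ ∙ e)ᗮ := Module.nontrivial_of_finrank_pos (R := ℝ) (by rw [hdim]; lia)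
  have hdet : (uniaxialMatrix e.ofLp a⁻¹ b⁻¹).det = 1 := by
    rw [det_uniaxialMatrix he' _ (by positivity), Fintype.card_fin, inv_pow, ← mul_inv, hab,
      inv_one]
  obtain ⟨hint, hη⟩ := hell (uniaxialMatrix e.ofLp a⁻¹ b⁻¹)
    (posDef_uniaxialMatrix he' (by positivity) (by positivity)) hdet
  have hsplit := measurePreserving_axisSplit e he
  rw [← hsplit.integrable_comp_emb (axisSplit e he).measurableEmbedding] at hint
  rw [LA, ← hsplit.integral_comp'] at hη
  simp only [Function.comp_def, kernelA_uniaxialMatrix_axisSplit he ha hb] at hint hη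
  have hle := integral_delta2_add_mul_biaxialKernel_le hs ha hb (by rwa [hdim])
    (by rw [hdim, hcast]; ring) hu hω hωs huω hfrac hint
  rw [hdim, hcast] at hle
  exact hη.trans <| mul_le_mul_of_nonneg_left (mul_le_mul_of_nonneg_left hle (by norm_num))
    (by linarith)

theorem EllipticityBound.le_C2_mul_add_C1_mul (hell : EllipticityBound s η₀ u x) (hn : 2 ≤ n)
    (hs : 1 / 2 < s) (hs1 : s < 1) (hL : 0 < L) (hC : 0 < C) (hu : Measurable u)
    (huω : ∀ y z, delta2 u y z ≤ semiconcaveModulus L C ‖z‖) (he : ‖e‖ = 1)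
    (hfrac : FracIntegrable s fun r => delta2 u x (r • e)) (ha : 0 < a) (hb : 0 < b)
    (hab : a * b ^ (n - 1) = 1) :
    η₀ ≤ C2 n s * a ^ (-(2 * s)) * ((1 - s) * fracMoment s fun r => delta2 u x (r • e)) +
      C1 n s L C * b ^ (-(2 * s)) := by
  refine (hell.le_of_delta2_le hn (by linarith) hs1.le hu (measurable_semiconcaveModulus L C)
    (fracIntegrable_semiconcaveModulus hs hs1 hL hC) huω he hfrac ha hb hab).trans_eq ?_
  rw [C1_eq_bracketIntegral, C2_eq_bracketIntegral hn,
    ← one_sub_mul_fracMoment_semiconcaveModulus hs hs1 hL hC]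
  ring

theorem EllipticityBound.mu0_le (hell : EllipticityBound s η₀ u x) (hn : 2 ≤ n) (hs : 1 / 2 < s)
    (hs1 : s < 1) (hL : 0 < L) (hC : 0 < C) (hη : 0 < η₀) (hu : Measurable u)
    (huω : ∀ y z, delta2 u y z ≤ semiconcaveModulus L C ‖z‖) (he : ‖e‖ = 1)
    (hfrac : FracIntegrable s fun r => delta2 u x (r • e)) :
    mu0 n s L C η₀ ≤ (1 - s) * fracMoment s fun r => delta2 u x (r • e) := by
  have hs0 : 0 < s := by linarith
  have hC1 := C1_pos hn hs hL hC
  rw [mu0_eq_pow (by lia) hC1.le]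
  exact inv_pow_mul_inv_mul_pow_le_of_forall_le hs0 hC1 (C2_pos hn hs0.le) hη
    fun a b ha hb hab => hell.le_C2_mul_add_C1_mul hn hs hs1 hL hC hu huω he hfrac ha hb hab

end DirectionalBound

section AngularBound

variable {E : Type*} [NormedAddCommGroup E] [NormedSpace ℝ E]

theorem pow_smul_mul_norm_rpow_smul [FiniteDimensional ℝ E] [Nontrivial E] (T : E ≃L[ℝ] E)
    (f : E → ℝ) (s : ℝ) (e : E) {r : ℝ} (hr : 0 < r) :
    r ^ (Module.finrank ℝ E - 1) • (f (r • e) * ‖T (r • e)‖ ^ (-(Module.finrank ℝ E + 2 * s))) =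
      ‖T e‖ ^ (-(Module.finrank ℝ E + 2 * s)) * (f (r • e) * r ^ (-1 - 2 * s)) := by
  have hexp : -(Module.finrank ℝ E + 2 * s) = -(Module.finrank ℝ E : ℝ) - 2 * s := by ring
  rw [map_smul, norm_smul, Real.norm_of_nonneg hr.le, Real.mul_rpow hr.le (norm_nonneg _),
    ← pow_sub_one_mul_rpow_neg_sub (Module.finrank_pos (R := ℝ) (M := E)) s hr, hexp,
    smul_eq_mul]
  ring

variable [FiniteDimensional ℝ E] [Nontrivial E] [MeasurableSpace E] [BorelSpace E] {μ : Measure E}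
  [μ.IsAddHaarMeasure]

theorem mul_integral_sphere_rpow_le_of_le_fracMoment {T : E ≃L[ℝ] E} {f : E → ℝ} {s c : ℝ}
    (hint : Integrable (fun y => f y * ‖T y‖ ^ (-(Module.finrank ℝ E + 2 * s))) μ)
    (hf : ∀ e : E, ‖e‖ = 1 → FracIntegrable s (fun r => f (r • e)) →
      c ≤ fracMoment s fun r => f (r • e)) :
    c * ∫ σ : sphere (0 : E) 1, ‖T σ‖ ^ (-(Module.finrank ℝ E + 2 * s)) ∂μ.toSphere ≤
      ∫ y, f y * ‖T y‖ ^ (-(Module.finrank ℝ E + 2 * s)) ∂μ := by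
  have hpos (σ : sphere (0 : E) 1) : 0 < ‖T σ‖ :=
    norm_pos_iff.2 (T.map_ne_zero_iff.2 (ne_zero_of_mem_unit_sphere σ))
  have hcont : Continuous fun σ : sphere (0 : E) 1 =>
      ‖T σ‖ ^ (-(Module.finrank ℝ E + 2 * s)) :=
    (T.continuous.comp continuous_subtype_val).norm.rpow_const fun σ => .inl (hpos σ).ne'
  rw [integral_eq_integral_polar μ hint, ← integral_const_mul]
  refine integral_mono_ae
    ((hcont.integrable_of_hasCompactSupport (.of_compactSpace _)).const_mul c)
    (integrable_integral_polar μ hint) ?_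
  filter_upwards [ae_integrableOn_polar μ hint] with σ hσ
  have hweight := Real.rpow_pos_of_pos (hpos σ) (-(Module.finrank ℝ E + 2 * s))
  have hray : EqOn _ _ (Ioi (0 : ℝ)) := fun r hr => pow_smul_mul_norm_rpow_smul T f s σ hr
  have hfrac : FracIntegrable s fun r => f (r • (σ : E)) :=
    (integrable_const_mul_iff hweight.ne'.isUnit _).1 (hσ.congr_fun hray measurableSet_Ioi)
  rw [setIntegral_congr_fun measurableSet_Ioi hray, integral_const_mul, mul_comm c]
  exact mul_le_mul_of_nonneg_left (hf σ (norm_eq_of_mem_sphere σ) hfrac) hweight.le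

end AngularBound

section Conclusion

variable {n : ℕ} {s L C η₀ : ℝ} {u : EuclideanSpace ℝ (Fin n) → ℝ} {x : EuclideanSpace ℝ (Fin n)}

theorem kernelA_eq_delta2_mul_norm_rpow {A : Matrix (Fin n) (Fin n) ℝ} (hA : IsUnit A.det)
    (y : EuclideanSpace ℝ (Fin n)) :
    kernelA s A u x y = delta2 u x y * ‖(mulVecEquiv A hA).symm y‖ ^ (-(n + 2 * s)) := by
  rw [mulVecEquiv_symm_apply, Real.rpow_neg (norm_nonneg _), ← div_eq_mul_inv]
  rfl

theorem EllipticityBound.mul_integral_sphere_le_LA (hell : EllipticityBound s η₀ u x)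
    (hn : 2 ≤ n) (hs : 1 / 2 < s) (hs1 : s < 1) (hL : 0 < L) (hC : 0 < C) (hη : 0 < η₀)
    (hu : Measurable u) (huω : ∀ y z, delta2 u y z ≤ semiconcaveModulus L C ‖z‖)
    {A : Matrix (Fin n) (Fin n) ℝ} (hA : A.PosDef) (hA' : IsUnit A.det) (hdet : A.det = 1) :
    mu0 n s L C η₀ / 2 * ∫ σ : sphere (0 : EuclideanSpace ℝ (Fin n)) 1,
      ‖mulVecEquiv A hA' σ‖ ^ (2 * s) ∂volume.toSphere ≤ (1 - s) * LA s A u x := by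
  have hs1' : 0 < 1 - s := by linarith
  have : Nonempty (Fin n) := ⟨⟨0, by lia⟩⟩
  have hint := (hell A hA hdet).1
  simp only [kernelA_eq_delta2_mul_norm_rpow hA'] at hint
  have hle := mul_integral_sphere_rpow_le_of_le_fracMoment (μ := volume)
    (T := (mulVecEquiv A hA').symm) (f := delta2 u x) (s := s) (c := mu0 n s L C η₀ / (1 - s))
    (by rwa [finrank_euclideanSpace_fin]) fun e he hfrac =>
      (div_le_iff₀' hs1').2 (hell.mu0_le hn hs hs1 hL hC hη hu huω he hfrac)
  rw [integral_sphere_rpow_norm_inv (measurePreserving_mulVecEquiv hA' hdet) (by linarith),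
    finrank_euclideanSpace_fin, div_mul_eq_mul_div, div_le_iff₀' hs1'] at hle
  simp only [LA, kernelA_eq_delta2_mul_norm_rpow hA']
  linarith

theorem kernelA_diagonal_inv {ε : Fin n → ℝ} (hε : ∀ j, ε j ≠ 0)
    (y : EuclideanSpace ℝ (Fin n)) :
    kernelA s (Matrix.diagonal fun j => (ε j)⁻¹) u x y =
      delta2 u x y / (∑ j, ε j ^ 2 * y j ^ 2) ^ (((n : ℝ) + 2 * s) / 2) := by
  have hinv : (Matrix.diagonal fun j => (ε j)⁻¹)⁻¹ = Matrix.diagonal ε :=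
    Matrix.inv_eq_right_inv <| by
      rw [Matrix.diagonal_mul_diagonal]
      simp only [inv_mul_cancel₀ (hε _), Matrix.diagonal_one]
  rw [kernelA, hinv, EuclideanSpace.norm_eq, Real.sqrt_eq_rpow,
    ← Real.rpow_mul (Finset.sum_nonneg fun _ _ => by positivity)]
  simp only [Matrix.mulVec_diagonal, Real.norm_eq_abs, sq_abs, EuclideanSpace.equiv,
    PiLp.continuousLinearEquiv_symm_apply, PiLp.continuousLinearEquiv_apply, mul_pow]
  congr 2
  ring

end Conclusion

theorem stmt2 (n : ℕ) (hn : 2 ≤ n) (s L C η₀ : ℝ)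
    (hs : 1 / 2 < s) (hs1 : s < 1) (hL : 0 < L) (hC : 0 < C) (hη : 0 < η₀)
    (u : EuclideanSpace ℝ (Fin n) → ℝ)
    (hLip : ∀ a b : EuclideanSpace ℝ (Fin n), |u a - u b| ≤ L * ‖a - b‖)
    (hSC : ∀ a b : EuclideanSpace ℝ (Fin n), delta2 u a b ≤ C * ‖b‖ ^ 2)
    (x : EuclideanSpace ℝ (Fin n))
    (hEll : ∀ A : Matrix (Fin n) (Fin n) ℝ, A.PosDef → A.det = 1 →
      Integrable (fun y => kernelA s A u x y) ∧ η₀ ≤ (1 - s) * LA s A u x)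
    (ε : Fin n → ℝ) (hε : ∀ j, 0 < ε j) (hprod : ∏ j, ε j = 1) :
    mu0 n s L C η₀ * surfOmega n / (2 * n) * ∑ j, ε j ^ (-(2 * s)) ≤
      (1 - s) * (1 / 2 * ∫ y : EuclideanSpace ℝ (Fin n),
        delta2 u x y / (∑ j, ε j ^ 2 * y j ^ 2) ^ (((n : ℝ) + 2 * s) / 2)) := by
  have : Nonempty (Fin n) := ⟨⟨0, by lia⟩⟩
  have hε' (j : Fin n) : 0 < (ε j)⁻¹ := inv_pos.2 (hε j)
  have hu : Measurable u := (continuous_of_abs_sub_le hLip).measurable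
  have hdet : (Matrix.diagonal fun j => (ε j)⁻¹).det = 1 := by
    rw [Matrix.det_diagonal, Finset.prod_inv_distrib, hprod, inv_one]
  have hunit : IsUnit (Matrix.diagonal fun j => (ε j)⁻¹).det := hdet ▸ isUnit_one
  have hjensen := surfOmega_div_mul_sum_rpow_le_integral_sphere (p := 2 * s) (by linarith)
    (by linarith) (fun j => (hε' j).le) hunit
  have hLA := EllipticityBound.mul_integral_sphere_le_LA hEll hn hs hs1 hL hC hη hu
    (delta2_le_semiconcaveModulus hLip hSC) (.diagonal hε') hunit hdet
  simp only [LA, kernelA_diagonal_inv fun j => (hε j).ne'] at hLA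
  rw [Fintype.card_fin] at hjensen
  have hmu0 := mu0_nonneg hn hs hL hC hη.le
  calc
    _ = mu0 n s L C η₀ / 2 * (surfOmega n / n * ∑ j, (ε j)⁻¹ ^ (2 * s)) := by
      simp only [Real.rpow_neg (hε _).le, Real.inv_rpow (hε _).le]
      ring
    _ ≤ _ := mul_le_mul_of_nonneg_left hjensen (by positivity)
    _ ≤ _ := hLA
end

section
/- Let n ≥ 2, 1/2 < s < 1, ε > 0, and let L, C > 0. Let u : ℝⁿ → ℝ be Lipschitz with constant L and semiconcave with constant C. Write points of ℝⁿ as (y₁, ȳ) with y₁ ∈ ℝ, ȳ ∈ ℝ^{n−1}. If the function y ↦ (u(y₁, ȳ) − u(y₁, 0̄))/(ε² y₁² + ε^{−2/(n−1)} |ȳ|²)^{(n+2s)/2} is Lebesgue integrable on ℝⁿ, then (1−s)·∫_{ℝⁿ} (u(y₁, ȳ) − u(y₁, 0̄))/(ε² y₁² + ε^{−2/(n−1)} |ȳ|²)^{(n+2s)/2} dy ≤ C₁·ε^{2s/(n−1)}. -/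
open MeasureTheory

/-!
Averaging the integrand over `ȳ ↦ -ȳ` replaces `u(y₁, ȳ) - u(y₁, 0)` by half a second difference of
`u`, which is at most `min (C |ȳ|²) (2 L |ȳ|)`: semiconcavity controls small `ȳ`, the Lipschitz
bound large `ȳ`. The majorant depends on `|ȳ|` only, so its integral is explicit: integrating out
`y₁` gives a Gamma quotient times `|ȳ|^(1 - n - 2s)`, and polar coordinates in `ȳ` leave two power
integrals, meeting at the radius `2L / C` where the two bounds agree.
-/

open Module Set

section BetaIntegral

variable {p : ℝ}

lemma integrable_inv_one_add_sq_rpow (hp : 1 / 2 < p) :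
    Integrable fun t : ℝ => ((1 + t ^ 2) ^ p)⁻¹ := by
  have hdim : (finrank ℝ ℝ : ℝ) < 2 * p := by
    rw [finrank_self]
    push_cast
    linarith
  refine (integrable_rpow_neg_one_add_norm_sq (μ := volume) hdim).congr (.of_forall fun t => ?_)
  simp only [Real.norm_eq_abs, sq_abs]
  rw [← Real.rpow_neg (by positivity), show -(2 * p) / 2 = -p by ring]

lemma integral_Ioi_rpow_mul_exp_neg_one_add_sq_mul (hp : 0 < p) (t : ℝ) :
    ∫ x in Ioi (0 : ℝ), x ^ (p - 1) * Real.exp (-((1 + t ^ 2) * x)) =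
      ((1 + t ^ 2) ^ p)⁻¹ * Real.Gamma p := by
  rw [Real.integral_rpow_mul_exp_neg_mul_Ioi hp (by positivity), one_div,
    Real.inv_rpow (by positivity)]

lemma integral_rpow_mul_exp_neg_one_add_sq_mul {x : ℝ} (hx : 0 < x) :
    ∫ t : ℝ, x ^ (p - 1) * Real.exp (-((1 + t ^ 2) * x)) =
      √Real.pi * (x ^ (p - 1 / 2 - 1) * Real.exp (-(1 * x))) := by
  have hexp (t : ℝ) : x ^ (p - 1) * Real.exp (-((1 + t ^ 2) * x)) =
      x ^ (p - 1) * Real.exp (-(1 * x)) * Real.exp (-x * t ^ 2) := by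
    rw [mul_assoc, ← Real.exp_add]
    ring_nf
  have hpow : x ^ (p - 1 / 2 - 1) = x ^ (p - 1) / √x := by
    rw [Real.sqrt_eq_rpow, ← Real.rpow_sub hx]
    ring_nf
  simp_rw [hexp]
  rw [integral_const_mul, integral_gaussian, Real.sqrt_div Real.pi_pos.le, hpow]
  ring

lemma integrable_rpow_mul_exp_neg_one_add_sq_mul (hp : 1 / 2 < p) :
    Integrable (Function.uncurry fun t x : ℝ => x ^ (p - 1) * Real.exp (-((1 + t ^ 2) * x)))
      (volume.prod (volume.restrict (Ioi 0))) := by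
  have hp₀ : 0 < p := by linarith
  have hmeas : Measurable
      (Function.uncurry fun t x : ℝ => x ^ (p - 1) * Real.exp (-((1 + t ^ 2) * x))) := by
    simp only [Function.uncurry_def]
    fun_prop
  refine (integrable_prod_iff hmeas.aestronglyMeasurable).2 ⟨.of_forall fun t => ?_, ?_⟩
  · refine .of_integral_ne_zero ?_
    simp only [Function.uncurry_apply_pair]
    rw [integral_Ioi_rpow_mul_exp_neg_one_add_sq_mul hp₀]
    have := Real.Gamma_pos_of_pos hp₀
    positivity
  · refine ((integrable_inv_one_add_sq_rpow hp).mul_const (Real.Gamma p)).congr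
      (.of_forall fun t => ?_)
    simp only [Function.uncurry_apply_pair]
    rw [← integral_Ioi_rpow_mul_exp_neg_one_add_sq_mul hp₀]
    refine setIntegral_congr_fun measurableSet_Ioi fun x (hx : 0 < x) => ?_
    exact (Real.norm_of_nonneg (by positivity)).symm

-- Both sides, multiplied by `Γ(p)`, are iterated integrals of `x ^ (p - 1) * exp (-(1 + t²) x)`.
lemma integral_inv_one_add_sq_rpow (hp : 1 / 2 < p) :
    ∫ t : ℝ, ((1 + t ^ 2) ^ p)⁻¹ = √Real.pi * Real.Gamma (p - 1 / 2) / Real.Gamma p := by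
  have hp₀ : 0 < p := by linarith
  rw [eq_div_iff (Real.Gamma_pos_of_pos hp₀).ne']
  calc (∫ t : ℝ, ((1 + t ^ 2) ^ p)⁻¹) * Real.Gamma p
      = ∫ t : ℝ, ∫ x in Ioi (0 : ℝ), x ^ (p - 1) * Real.exp (-((1 + t ^ 2) * x)) := by
        simp_rw [integral_Ioi_rpow_mul_exp_neg_one_add_sq_mul hp₀, integral_mul_const]
    _ = ∫ x in Ioi (0 : ℝ), ∫ t : ℝ, x ^ (p - 1) * Real.exp (-((1 + t ^ 2) * x)) :=
        integral_integral_swap (integrable_rpow_mul_exp_neg_one_add_sq_mul hp)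
    _ = ∫ x in Ioi (0 : ℝ), √Real.pi * (x ^ (p - 1 / 2 - 1) * Real.exp (-(1 * x))) :=
        setIntegral_congr_fun measurableSet_Ioi fun _ =>
          integral_rpow_mul_exp_neg_one_add_sq_mul
    _ = √Real.pi * Real.Gamma (p - 1 / 2) := by
        rw [integral_const_mul, Real.integral_rpow_mul_exp_neg_mul_Ioi (by linarith) one_pos,
          div_one, Real.one_rpow, one_mul]

variable {a b : ℝ}

lemma inv_mul_sq_add_rpow (ha : 0 ≤ a) (hb : 0 < b) (t : ℝ) :
    ((a * t ^ 2 + b) ^ p)⁻¹ = (b ^ p)⁻¹ * ((1 + (√(a / b) * t) ^ 2) ^ p)⁻¹ := by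
  rw [← mul_inv, ← Real.mul_rpow hb.le (by positivity), mul_pow, Real.sq_sqrt (by positivity)]
  congr 2
  field_simp
  ring

lemma integrable_inv_mul_sq_add_rpow (hp : 1 / 2 < p) (ha : 0 < a) (hb : 0 < b) :
    Integrable fun t : ℝ => ((a * t ^ 2 + b) ^ p)⁻¹ := by
  simp_rw [inv_mul_sq_add_rpow ha.le hb]
  exact ((integrable_inv_one_add_sq_rpow hp).comp_mul_left'
    (Real.sqrt_pos.2 (div_pos ha hb)).ne').const_mul _

lemma integral_inv_mul_sq_add_rpow (hp : 1 / 2 < p) (ha : 0 < a) (hb : 0 < b) :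
    ∫ t : ℝ, ((a * t ^ 2 + b) ^ p)⁻¹ =
      √Real.pi * Real.Gamma (p - 1 / 2) / Real.Gamma p * (b ^ (1 / 2 - p) / √a) := by
  have hpow : b ^ (1 / 2 - p) = √b * (b ^ p)⁻¹ := by
    rw [sub_eq_add_neg, Real.rpow_add hb, Real.sqrt_eq_rpow, Real.rpow_neg hb.le]
  simp_rw [inv_mul_sq_add_rpow ha.le hb]
  rw [integral_const_mul, Measure.integral_comp_mul_left fun t : ℝ => ((1 + t ^ 2) ^ p)⁻¹,
    integral_inv_one_add_sq_rpow hp, smul_eq_mul, abs_of_nonneg (by positivity),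
    Real.sqrt_div ha.le, inv_div, hpow]
  ring

end BetaIntegral

section FiberIntegration

variable {E : Type*} [NormedAddCommGroup E] {p a b : ℝ} {g : E → ℝ}

lemma integral_div_mul_sq_add_mul_norm_sq_rpow (hp : 1 / 2 < p) (ha : 0 < a) (hb : 0 < b)
    (c : ℝ) {z : E} (hz : z ≠ 0) :
    ∫ t : ℝ, c / (a * t ^ 2 + b * ‖z‖ ^ 2) ^ p =
      √Real.pi * Real.Gamma (p - 1 / 2) / Real.Gamma p * (b ^ (1 / 2 - p) / √a) *
        (c * ‖z‖ ^ (1 - 2 * p)) := by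
  have hz' : 0 < ‖z‖ := norm_pos_iff.2 hz
  have hpow : (‖z‖ ^ 2) ^ (1 / 2 - p) = ‖z‖ ^ (1 - 2 * p) := by
    rw [← Real.rpow_natCast, ← Real.rpow_mul hz'.le]
    congr 1
    push_cast
    ring
  simp_rw [div_eq_mul_inv c]
  rw [integral_const_mul, integral_inv_mul_sq_add_rpow hp ha (by positivity),
    Real.mul_rpow hb.le (by positivity), hpow]
  ring

variable [MeasurableSpace E] [BorelSpace E] {μ : Measure E} [SFinite μ] [NullSingletonClass μ]

lemma integrable_prod_div_mul_sq_add_mul_norm_sq_rpow (hp : 1 / 2 < p) (ha : 0 < a) (hb : 0 < b)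
    (hmeas : AEStronglyMeasurable g μ) (hg : Integrable (fun z => g z * ‖z‖ ^ (1 - 2 * p)) μ) :
    Integrable (fun q : ℝ × E => g q.2 / (a * q.1 ^ 2 + b * ‖q.2‖ ^ 2) ^ p)
      (volume.prod μ) := by
  have hmeas' : AEStronglyMeasurable
      (fun q : ℝ × E => g q.2 / (a * q.1 ^ 2 + b * ‖q.2‖ ^ 2) ^ p) (volume.prod μ) :=
    hmeas.comp_snd.div₀ (Measurable.aestronglyMeasurable (by fun_prop))
  refine (integrable_prod_iff' hmeas').2 ⟨?_, ?_⟩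
  · filter_upwards [μ.ae_ne 0] with z hz
    exact (integrable_inv_mul_sq_add_rpow hp ha (by positivity)).const_mul (g z)
  · refine (hg.norm.const_mul
      (√Real.pi * Real.Gamma (p - 1 / 2) / Real.Gamma p * (b ^ (1 / 2 - p) / √a))).congr ?_
    filter_upwards [μ.ae_ne 0] with z hz
    have hnorm (t : ℝ) : ‖g z / (a * t ^ 2 + b * ‖z‖ ^ 2) ^ p‖ =
        ‖g z‖ / (a * t ^ 2 + b * ‖z‖ ^ 2) ^ p := by
      rw [norm_div, Real.norm_of_nonneg (by positivity : 0 ≤ (a * t ^ 2 + b * ‖z‖ ^ 2) ^ p)]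
    simp_rw [hnorm]
    rw [integral_div_mul_sq_add_mul_norm_sq_rpow hp ha hb _ hz, norm_mul,
      Real.norm_of_nonneg (by positivity : 0 ≤ ‖z‖ ^ (1 - 2 * p))]

lemma integral_prod_div_mul_sq_add_mul_norm_sq_rpow (hp : 1 / 2 < p) (ha : 0 < a) (hb : 0 < b)
    (hmeas : AEStronglyMeasurable g μ) (hg : Integrable (fun z => g z * ‖z‖ ^ (1 - 2 * p)) μ) :
    ∫ q : ℝ × E, g q.2 / (a * q.1 ^ 2 + b * ‖q.2‖ ^ 2) ^ p ∂volume.prod μ =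
      √Real.pi * Real.Gamma (p - 1 / 2) / Real.Gamma p * (b ^ (1 / 2 - p) / √a) *
        ∫ z, g z * ‖z‖ ^ (1 - 2 * p) ∂μ := by
  rw [integral_prod_symm _ (integrable_prod_div_mul_sq_add_mul_norm_sq_rpow hp ha hb hmeas hg),
    ← integral_const_mul]
  refine integral_congr_ae ?_
  filter_upwards [μ.ae_ne 0] with z hz
  exact integral_div_mul_sq_add_mul_norm_sq_rpow hp ha hb (g z) hz

end FiberIntegration

/-- The bound on the second difference `δ(u, x, y)`, `|y| = r`, of a function `u` which is Lipschitz
with constant `L` and semiconcave with constant `C`. -/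
noncomputable def secondDiffBound (L C r : ℝ) : ℝ := min (C * r ^ 2) (2 * L * r)

lemma delta2_le_secondDiffBound {n : ℕ} {L C : ℝ} {u : EuclideanSpace ℝ (Fin n) → ℝ}
    (hLip : ∀ x y, |u x - u y| ≤ L * ‖x - y‖) (hSC : ∀ x y, delta2 u x y ≤ C * ‖y‖ ^ 2)
    (x y : EuclideanSpace ℝ (Fin n)) : delta2 u x y ≤ secondDiffBound L C ‖y‖ := by
  refine le_min (hSC x y) ?_
  have hadd : u (x + y) - u x ≤ L * ‖y‖ := by
    simpa using (le_abs_self _).trans (hLip (x + y) x)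
  have hsub : u (x - y) - u x ≤ L * ‖y‖ := by
    simpa using (le_abs_self _).trans (hLip (x - y) x)
  rw [delta2]
  linarith

section RadialIntegral

variable {s L C r : ℝ}

lemma measurable_secondDiffBound : Measurable (secondDiffBound L C) := by
  unfold secondDiffBound
  fun_prop

lemma secondDiffBound_mul_rpow_of_le (hC : 0 < C) (hr : 0 < r) (h : r ≤ 2 * L / C) :
    secondDiffBound L C r * r ^ (-1 - 2 * s) = C * r ^ (1 - 2 * s) := by
  have hmin : C * r ^ 2 ≤ 2 * L * r := by
    rw [le_div_iff₀ hC] at h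
    nlinarith
  rw [secondDiffBound, min_eq_left hmin, mul_assoc, ← Real.rpow_natCast, ← Real.rpow_add hr]
  congr 2
  push_cast
  ring

lemma secondDiffBound_mul_rpow_of_ge (hC : 0 < C) (hr : 0 < r) (h : 2 * L / C ≤ r) :
    secondDiffBound L C r * r ^ (-1 - 2 * s) = 2 * L * r ^ (-2 * s) := by
  have hmin : 2 * L * r ≤ C * r ^ 2 := by
    rw [div_le_iff₀ hC] at h
    nlinarith
  rw [secondDiffBound, min_eq_right hmin, show -2 * s = 1 + (-1 - 2 * s) by ring,
    Real.rpow_add hr, Real.rpow_one, mul_assoc]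

lemma integrableOn_Ioc_secondDiffBound_mul_rpow (hs1 : s < 1) (hL : 0 ≤ L) (hC : 0 < C) :
    IntegrableOn (fun r => secondDiffBound L C r * r ^ (-1 - 2 * s)) (Ioc 0 (2 * L / C)) := by
  have hpow : IntegrableOn (fun r : ℝ => r ^ (1 - 2 * s)) (Ioc 0 (2 * L / C)) :=
    (intervalIntegrable_iff_integrableOn_Ioc_of_le (by positivity)).1
      (intervalIntegral.intervalIntegrable_rpow' (by linarith))
  exact IntegrableOn.congr_fun (hpow.const_mul C)
    (fun r hr => (secondDiffBound_mul_rpow_of_le hC hr.1 hr.2).symm) measurableSet_Ioc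

lemma integrableOn_Ioi_two_mul_div_secondDiffBound_mul_rpow (hs : 1 / 2 < s) (hL : 0 < L)
    (hC : 0 < C) :
    IntegrableOn (fun r => secondDiffBound L C r * r ^ (-1 - 2 * s)) (Ioi (2 * L / C)) := by
  have hR : 0 < 2 * L / C := by positivity
  refine IntegrableOn.congr_fun
    ((integrableOn_Ioi_rpow_of_lt (a := -2 * s) (by linarith) hR).const_mul (2 * L))
    (fun r hr => ?_) measurableSet_Ioi
  exact (secondDiffBound_mul_rpow_of_ge hC (hR.trans hr) (le_of_lt hr)).symm

lemma integrableOn_Ioi_secondDiffBound_mul_rpow (hs : 1 / 2 < s) (hs1 : s < 1) (hL : 0 < L)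
    (hC : 0 < C) :
    IntegrableOn (fun r => secondDiffBound L C r * r ^ (-1 - 2 * s)) (Ioi 0) := by
  rw [← Ioc_union_Ioi_eq_Ioi (show 0 ≤ 2 * L / C by positivity)]
  exact (integrableOn_Ioc_secondDiffBound_mul_rpow hs1 hL.le hC).union
    (integrableOn_Ioi_two_mul_div_secondDiffBound_mul_rpow hs hL hC)

lemma integral_Ioc_secondDiffBound_mul_rpow (hs1 : s < 1) (hL : 0 ≤ L) (hC : 0 < C) :
    ∫ r in Ioc 0 (2 * L / C), secondDiffBound L C r * r ^ (-1 - 2 * s) =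
      C * (2 * L / C) ^ (2 - 2 * s) / (2 - 2 * s) := by
  rw [setIntegral_congr_fun measurableSet_Ioc
      fun r hr => secondDiffBound_mul_rpow_of_le hC hr.1 hr.2,
    integral_const_mul, ← intervalIntegral.integral_of_le (by positivity),
    integral_rpow (.inl (by linarith)), show 1 - 2 * s + 1 = 2 - 2 * s by ring,
    Real.zero_rpow (by linarith), sub_zero, ← mul_div_assoc]

lemma integral_Ioi_two_mul_div_secondDiffBound_mul_rpow (hs : 1 / 2 < s) (hL : 0 < L)
    (hC : 0 < C) :
    ∫ r in Ioi (2 * L / C), secondDiffBound L C r * r ^ (-1 - 2 * s) =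
      C * (2 * L / C) ^ (2 - 2 * s) / (2 * s - 1) := by
  have hR : 0 < 2 * L / C := by positivity
  have hpow : C * (2 * L / C) ^ (2 - 2 * s) = 2 * L * (2 * L / C) ^ (1 - 2 * s) := by
    rw [show 2 - 2 * s = 1 + (1 - 2 * s) by ring, Real.rpow_add hR, Real.rpow_one]
    field_simp
  rw [setIntegral_congr_fun measurableSet_Ioi
      fun r hr => secondDiffBound_mul_rpow_of_ge hC (hR.trans hr) (le_of_lt hr),
    integral_const_mul, integral_Ioi_rpow_of_lt (by linarith) hR, hpow,
    show -2 * s + 1 = 1 - 2 * s by ring, show 2 * s - 1 = -(1 - 2 * s) by ring,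
    neg_div, ← div_neg, ← mul_div_assoc]

lemma mul_two_mul_div_rpow (hL : 0 ≤ L) (hC : 0 < C) :
    C * (2 * L / C) ^ (2 - 2 * s) = 2 * (L ^ (2 - 2 * s) * (C / 2) ^ (2 * s - 1)) := by
  rw [show 2 * L / C = L / (C / 2) by field_simp, Real.div_rpow hL (by positivity),
    show 2 * s - 1 = 1 - (2 - 2 * s) by ring, Real.rpow_sub (by positivity) 1, Real.rpow_one]
  ring

lemma one_sub_mul_integral_Ioi_secondDiffBound_mul_rpow (hs : 1 / 2 < s) (hs1 : s < 1) (hL : 0 < L)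
    (hC : 0 < C) :
    (1 - s) * ∫ r in Ioi 0, secondDiffBound L C r * r ^ (-1 - 2 * s) = mu1 s L C := by
  have h₁ : 2 - 2 * s ≠ 0 := by linarith
  have h₂ : 2 * s - 1 ≠ 0 := by linarith
  have hsum (K : ℝ) : (1 - s) * (2 * K / (2 - 2 * s) + 2 * K / (2 * s - 1)) = K / (2 * s - 1) := by
    rw [div_add_div _ _ h₁ h₂, ← mul_div_assoc, div_eq_div_iff (mul_ne_zero h₁ h₂) h₂]
    ring
  rw [← Ioc_union_Ioi_eq_Ioi (show 0 ≤ 2 * L / C by positivity),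
    setIntegral_union (Ioc_disjoint_Ioi le_rfl) measurableSet_Ioi
      (integrableOn_Ioc_secondDiffBound_mul_rpow hs1 hL.le hC)
      (integrableOn_Ioi_two_mul_div_secondDiffBound_mul_rpow hs hL hC),
    integral_Ioc_secondDiffBound_mul_rpow hs1 hL.le hC,
    integral_Ioi_two_mul_div_secondDiffBound_mul_rpow hs hL hC, mul_two_mul_div_rpow hL.le hC,
    hsum, mu1]

end RadialIntegral

section HaarMeasure

variable {E : Type*} [NormedAddCommGroup E] [NormedSpace ℝ E] [FiniteDimensional ℝ E]
  [Nontrivial E] {a b s L C : ℝ}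

lemma pow_finrank_sub_one_smul_mul_rpow (c : ℝ) {r : ℝ} (hr : 0 < r) :
    r ^ (finrank ℝ E - 1) • (c * r ^ (-finrank ℝ E - 2 * s : ℝ)) = c * r ^ (-1 - 2 * s) := by
  have hdim : 1 ≤ finrank ℝ E := finrank_pos
  rw [smul_eq_mul, mul_left_comm, ← Real.rpow_natCast, ← Real.rpow_add hr, Nat.cast_sub hdim]
  congr 2
  push_cast
  ring

variable [MeasurableSpace E] [BorelSpace E] {μ : Measure E} [μ.IsAddHaarMeasure]

lemma integrable_secondDiffBound_norm_mul_rpow (hs : 1 / 2 < s) (hs1 : s < 1) (hL : 0 < L)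
    (hC : 0 < C) :
    Integrable (fun z : E => secondDiffBound L C ‖z‖ * ‖z‖ ^ (-finrank ℝ E - 2 * s : ℝ)) μ := by
  refine (integrable_fun_norm_addHaar μ
    (f := fun r => secondDiffBound L C r * r ^ (-finrank ℝ E - 2 * s : ℝ))).2 ?_
  exact (integrableOn_Ioi_secondDiffBound_mul_rpow hs hs1 hL hC).congr_fun
    (fun r hr => (pow_finrank_sub_one_smul_mul_rpow _ hr).symm) measurableSet_Ioi

lemma one_sub_mul_integral_secondDiffBound_norm_mul_rpow (hs : 1 / 2 < s) (hs1 : s < 1) (hL : 0 < L)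
    (hC : 0 < C) :
    (1 - s) * ∫ z : E, secondDiffBound L C ‖z‖ * ‖z‖ ^ (-finrank ℝ E - 2 * s : ℝ) ∂μ =
      finrank ℝ E * μ.real (Metric.ball 0 1) * mu1 s L C := by
  rw [integral_fun_norm_addHaar μ
      fun r => secondDiffBound L C r * r ^ (-finrank ℝ E - 2 * s : ℝ),
    setIntegral_congr_fun measurableSet_Ioi fun r hr => pow_finrank_sub_one_smul_mul_rpow _ hr,
    nsmul_eq_mul, smul_eq_mul, ← one_sub_mul_integral_Ioi_secondDiffBound_mul_rpow hs hs1 hL hC]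
  ring

lemma integrable_prod_secondDiffBound_div_rpow (ha : 0 < a) (hb : 0 < b) (hs : 1 / 2 < s)
    (hs1 : s < 1) (hL : 0 < L) (hC : 0 < C) :
    Integrable (fun q : ℝ × E => secondDiffBound L C ‖q.2‖ /
      (a * q.1 ^ 2 + b * ‖q.2‖ ^ 2) ^ ((finrank ℝ E + 1 + 2 * s) / 2)) (volume.prod μ) := by
  have hp : 1 / 2 < (finrank ℝ E + 1 + 2 * s) / 2 := by
    linarith [(finrank ℝ E).cast_nonneg (α := ℝ)]
  refine integrable_prod_div_mul_sq_add_mul_norm_sq_rpow hp ha hb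
    (measurable_secondDiffBound.comp measurable_norm).aestronglyMeasurable ?_
  have hexp : 1 - 2 * ((finrank ℝ E + 1 + 2 * s) / 2) = -finrank ℝ E - 2 * s := by ring
  exact hexp ▸ integrable_secondDiffBound_norm_mul_rpow hs hs1 hL hC

lemma one_sub_mul_integral_prod_secondDiffBound_div_rpow (ha : 0 < a) (hb : 0 < b) (hs : 1 / 2 < s)
    (hs1 : s < 1) (hL : 0 < L) (hC : 0 < C) :
    (1 - s) * ∫ q : ℝ × E, secondDiffBound L C ‖q.2‖ /
        (a * q.1 ^ 2 + b * ‖q.2‖ ^ 2) ^ ((finrank ℝ E + 1 + 2 * s) / 2) ∂volume.prod μ =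
      √Real.pi * Real.Gamma (finrank ℝ E / 2 + s) / Real.Gamma ((finrank ℝ E + 1) / 2 + s) *
        (mu1 s L C * (finrank ℝ E * μ.real (Metric.ball 0 1))) *
        (b ^ (-(finrank ℝ E / 2 + s)) / √a) := by
  have hp : 1 / 2 < (finrank ℝ E + 1 + 2 * s) / 2 := by
    linarith [(finrank ℝ E).cast_nonneg (α := ℝ)]
  have hexp : 1 - 2 * ((finrank ℝ E + 1 + 2 * s) / 2) = -finrank ℝ E - 2 * s := by ring
  rw [integral_prod_div_mul_sq_add_mul_norm_sq_rpow (g := fun z => secondDiffBound L C ‖z‖) hp ha hb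
      (measurable_secondDiffBound.comp measurable_norm).aestronglyMeasurable
      (hexp ▸ integrable_secondDiffBound_norm_mul_rpow hs hs1 hL hC),
    hexp, mul_left_comm, one_sub_mul_integral_secondDiffBound_norm_mul_rpow hs hs1 hL hC,
    show (finrank ℝ E + 1 + 2 * s) / 2 = (finrank ℝ E + 1) / 2 + s by ring,
    show (finrank ℝ E + 1) / 2 + s - 1 / 2 = finrank ℝ E / 2 + s by ring,
    show 1 / 2 - ((finrank ℝ E + 1) / 2 + s) = -(finrank ℝ E / 2 + s) by ring]
  ring

end HaarMeasure

lemma two_mul_integral_le_of_add_comp_le {α : Type*} [MeasurableSpace α] {μ : Measure α}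
    {σ : α ≃ᵐ α} (hσ : MeasurePreserving σ μ μ) {f g : α → ℝ} (hf : Integrable f μ)
    (hg : Integrable g μ) (h : ∀ x, f x + f (σ x) ≤ g x) : 2 * ∫ x, f x ∂μ ≤ ∫ x, g x ∂μ := by
  have hfσ : Integrable (fun x => f (σ x)) μ := hσ.integrable_comp_of_integrable hf
  calc 2 * ∫ x, f x ∂μ = ∫ x, f x + f (σ x) ∂μ := by
        rw [integral_add hf hfσ, hσ.integral_comp σ.measurableEmbedding f, two_mul]
    _ ≤ ∫ x, g x ∂μ := integral_mono (hf.add hfσ) hg h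

section ProductSpace

variable {E : Type*} [NormedAddCommGroup E] [NormedSpace ℝ E] [FiniteDimensional ℝ E]
  [Nontrivial E] [MeasurableSpace E] [BorelSpace E] {μ : Measure E} [μ.IsAddHaarMeasure]
  {a b s L C : ℝ} {v : ℝ × E → ℝ}

theorem integral_prod_sub_div_rpow_le (ha : 0 < a) (hb : 0 < b) (hs : 1 / 2 < s) (hs1 : s < 1)
    (hL : 0 < L) (hC : 0 < C)
    (hv : ∀ t z, v (t, z) + v (t, -z) - 2 * v (t, 0) ≤ secondDiffBound L C ‖z‖)
    (hint : Integrable (fun q : ℝ × E => (v q - v (q.1, 0)) /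
      (a * q.1 ^ 2 + b * ‖q.2‖ ^ 2) ^ ((finrank ℝ E + 1 + 2 * s) / 2)) (volume.prod μ)) :
    (1 - s) * ∫ q : ℝ × E, (v q - v (q.1, 0)) /
        (a * q.1 ^ 2 + b * ‖q.2‖ ^ 2) ^ ((finrank ℝ E + 1 + 2 * s) / 2) ∂volume.prod μ ≤
      √Real.pi * Real.Gamma (finrank ℝ E / 2 + s) / Real.Gamma ((finrank ℝ E + 1) / 2 + s) *
        (mu1 s L C * (finrank ℝ E * μ.real (Metric.ball 0 1)) / 2) *
        (b ^ (-(finrank ℝ E / 2 + s)) / √a) := by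
  let σ : ℝ × E ≃ᵐ ℝ × E := (MeasurableEquiv.refl ℝ).prodCongr (MeasurableEquiv.neg E)
  have hσ : MeasurePreserving σ (volume.prod μ) (volume.prod μ) :=
    (MeasurePreserving.id volume).prod (Measure.measurePreserving_neg μ)
  have hsymm := two_mul_integral_le_of_add_comp_le hσ hint
    (integrable_prod_secondDiffBound_div_rpow ha hb hs hs1 hL hC) fun ⟨t, z⟩ => by
      have hσz : σ (t, z) = (t, -z) := rfl
      simp only [hσz, norm_neg, ← add_div]
      exact div_le_div_of_nonneg_right (by linarith [hv t z]) (by positivity)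
  have hmajorant := one_sub_mul_integral_prod_secondDiffBound_div_rpow (μ := μ) ha hb hs hs1 hL hC
  linear_combination (1 - s) / 2 * hsymm + hmajorant / 2

end ProductSpace

section Coordinates

variable {m : ℕ} (i : Fin (m + 1))

/-- The measurable equivalence inserting a real number as the `i`-th coordinate of a vector; for
`i = 0` it is the identification of `(y₁, ȳ)` with a point of `ℝⁿ`. -/
noncomputable def insertCoord :
    ℝ × EuclideanSpace ℝ (Fin m) ≃ᵐ EuclideanSpace ℝ (Fin (m + 1)) :=
  ((MeasurableEquiv.refl ℝ).prodCongr (MeasurableEquiv.toLp 2 (Fin m → ℝ)).symm).trans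
    ((MeasurableEquiv.piFinSuccAbove (fun _ => ℝ) i).symm.trans
      (MeasurableEquiv.toLp 2 (Fin (m + 1) → ℝ)))

lemma measurePreserving_insertCoord : MeasurePreserving (insertCoord i) :=
  ((MeasurePreserving.id volume).prod (PiLp.volume_preserving_ofLp (Fin m))).trans
    ((volume_preserving_piFinSuccAbove (fun _ => ℝ) i).symm.trans
      (PiLp.volume_preserving_toLp (Fin (m + 1))))

@[simp]
lemma insertCoord_apply_same (q : ℝ × EuclideanSpace ℝ (Fin m)) : insertCoord i q i = q.1 :=
  Fin.insertNth_apply_same (α := fun _ => ℝ) i q.1 q.2.ofLp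

@[simp]
lemma insertCoord_apply_succAbove (q : ℝ × EuclideanSpace ℝ (Fin m)) (j : Fin m) :
    insertCoord i q (i.succAbove j) = q.2 j :=
  Fin.insertNth_apply_succAbove (α := fun _ => ℝ) i q.1 q.2.ofLp j

lemma sum_erase_insertCoord_sq (q : ℝ × EuclideanSpace ℝ (Fin m)) :
    ∑ j ∈ Finset.univ.erase i, insertCoord i q j ^ 2 = ‖q.2‖ ^ 2 := by
  rw [Finset.sum_erase_eq_sub (Finset.mem_univ i), Fin.sum_univ_succAbove _ i,
    EuclideanSpace.real_norm_sq_eq]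
  simp

variable (t : ℝ) (z : EuclideanSpace ℝ (Fin m))

lemma insertCoord_zero_right : insertCoord i (t, 0) = EuclideanSpace.single i t := by
  ext j
  cases j using i.succAboveCases <;> simp

lemma insertCoord_eq_single_add :
    insertCoord i (t, z) = EuclideanSpace.single i t + insertCoord i (0, z) := by
  ext j
  cases j using i.succAboveCases <;> simp

lemma insertCoord_neg_eq_single_sub :
    insertCoord i (t, -z) = EuclideanSpace.single i t - insertCoord i (0, z) := by
  ext j
  cases j using i.succAboveCases <;> simp

lemma norm_insertCoord_zero_left : ‖insertCoord i (0, z)‖ = ‖z‖ := by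
  simp [EuclideanSpace.norm_eq, Fin.sum_univ_succAbove _ i]

end Coordinates

lemma surfOmega_eq_mul_volume_ball {m : ℕ} (hm : m ≠ 0) :
    surfOmega m = m * volume.real (Metric.ball (0 : EuclideanSpace ℝ (Fin m)) 1) := by
  have : NeZero m := ⟨hm⟩
  have hpi : √Real.pi ^ m = Real.pi ^ ((m : ℝ) / 2) := by
    rw [Real.sqrt_eq_rpow, ← Real.rpow_natCast, ← Real.rpow_mul Real.pi_pos.le,
      one_div_mul_eq_div]
  have : 0 < Real.Gamma ((m : ℝ) / 2) := Real.Gamma_pos_of_pos (by positivity)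
  rw [measureReal_def, EuclideanSpace.volume_ball, Fintype.card_fin, ENNReal.ofReal_one, one_pow,
    one_mul, Real.Gamma_add_one (by positivity), ENNReal.toReal_ofReal (by positivity), hpi,
    surfOmega]
  field_simp

theorem stmt3_general {n : ℕ} (hn : 2 ≤ n) (i : Fin n) {a b s L C : ℝ} (ha : 0 < a) (hb : 0 < b)
    (hs : 1 / 2 < s) (hs1 : s < 1) (hL : 0 < L) (hC : 0 < C) {u : EuclideanSpace ℝ (Fin n) → ℝ}
    (hδ : ∀ t z, z i = 0 → delta2 u (EuclideanSpace.single i t) z ≤ secondDiffBound L C ‖z‖)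
    (hint : Integrable fun y : EuclideanSpace ℝ (Fin n) =>
      (u y - u (EuclideanSpace.single i (y i))) /
        (a * y i ^ 2 + b * ∑ j ∈ Finset.univ.erase i, y j ^ 2) ^ (((n : ℝ) + 2 * s) / 2)) :
    (1 - s) * ∫ y : EuclideanSpace ℝ (Fin n), (u y - u (EuclideanSpace.single i (y i))) /
        (a * y i ^ 2 + b * ∑ j ∈ Finset.univ.erase i, y j ^ 2) ^ (((n : ℝ) + 2 * s) / 2) ≤
      C1 n s L C * (b ^ (-(((n : ℝ) - 1) / 2 + s)) / √a) := by
  obtain ⟨m, rfl⟩ : ∃ m, n = m + 1 := ⟨n - 1, by omega⟩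
  have hm : m ≠ 0 := by omega
  have : NeZero m := ⟨hm⟩
  have hι := measurePreserving_insertCoord i
  have hδι (t : ℝ) (z : EuclideanSpace ℝ (Fin m)) : u (insertCoord i (t, z)) +
      u (insertCoord i (t, -z)) - 2 * u (insertCoord i (t, 0)) ≤ secondDiffBound L C ‖z‖ := by
    rw [insertCoord_eq_single_add, insertCoord_neg_eq_single_sub, insertCoord_zero_right,
      ← norm_insertCoord_zero_left i z]
    exact hδ t _ (insertCoord_apply_same i (0, z))
  have hintι := hι.integrable_comp_of_integrable hint
  have hle := integral_prod_sub_div_rpow_le (μ := volume) (v := fun q => u (insertCoord i q))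
    ha hb hs hs1 hL hC hδι
  rw [← hι.integral_comp (insertCoord i).measurableEmbedding, C1, Nat.add_sub_cancel,
    surfOmega_eq_mul_volume_ball hm]
  simp only [Function.comp_def, insertCoord_apply_same, sum_erase_insertCoord_sq,
    ← insertCoord_zero_right, Nat.cast_add, Nat.cast_one, add_sub_cancel_right,
    finrank_euclideanSpace_fin] at hintι hle ⊢
  exact hle hintι

lemma rpow_rpow_div_sqrt_sq {ε k : ℝ} (hε : 0 < ε) (hk : k ≠ 0) (s : ℝ) :
    (ε ^ (-2 / k)) ^ (-(k / 2 + s)) / √(ε ^ 2) = ε ^ (2 * s / k) := by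
  rw [Real.sqrt_sq hε.le, ← Real.rpow_mul hε.le, ← Real.rpow_sub_one hε.ne']
  congr 1
  field_simp
  ring

theorem stmt3 (n : ℕ) (hn : 2 ≤ n) (s ε L C : ℝ)
    (hs : 1 / 2 < s) (hs1 : s < 1) (hε : 0 < ε) (hL : 0 < L) (hC : 0 < C)
    (u : EuclideanSpace ℝ (Fin n) → ℝ)
    (hLip : ∀ a b : EuclideanSpace ℝ (Fin n), |u a - u b| ≤ L * ‖a - b‖)
    (hSC : ∀ a b : EuclideanSpace ℝ (Fin n), delta2 u a b ≤ C * ‖b‖ ^ 2)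
    (hint : Integrable (fun y : EuclideanSpace ℝ (Fin n) =>
      (u y - u (EuclideanSpace.single (⟨0, by omega⟩ : Fin n) (y ⟨0, by omega⟩))) /
        (ε ^ 2 * y (⟨0, by omega⟩ : Fin n) ^ 2 +
          ε ^ (-2 / ((n : ℝ) - 1)) * ∑ j ∈ Finset.univ.erase (⟨0, by omega⟩ : Fin n), y j ^ 2) ^
          (((n : ℝ) + 2 * s) / 2))) :
    (1 - s) * (∫ y : EuclideanSpace ℝ (Fin n),
      (u y - u (EuclideanSpace.single (⟨0, by omega⟩ : Fin n) (y ⟨0, by omega⟩))) /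
        (ε ^ 2 * y (⟨0, by omega⟩ : Fin n) ^ 2 +
          ε ^ (-2 / ((n : ℝ) - 1)) * ∑ j ∈ Finset.univ.erase (⟨0, by omega⟩ : Fin n), y j ^ 2) ^
          (((n : ℝ) + 2 * s) / 2)) ≤ C1 n s L C * ε ^ (2 * s / ((n : ℝ) - 1)) := by
  have hn' : (n : ℝ) - 1 ≠ 0 := by
    have : (2 : ℝ) ≤ n := by exact_mod_cast hn
    linarith
  rw [← rpow_rpow_div_sqrt_sq hε hn' s]
  exact stmt3_general hn _ (by positivity) (by positivity) hs hs1 hL hC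
    (fun _ z _ => delta2_le_secondDiffBound hLip hSC _ z) hint
end

section
/- Let n ≥ 2, 0 < s < 1, ε > 0, and let v : ℝ → ℝ be measurable with t ↦ v(t)/|t|^{1+2s} Lebesgue integrable on ℝ. Write points of ℝⁿ as (y₁, ȳ) with y₁ ∈ ℝ, ȳ ∈ ℝ^{n−1}. Then the function y ↦ v(y₁)/(ε² y₁² + ε^{−2/(n−1)} |ȳ|²)^{(n+2s)/2} is Lebesgue integrable on ℝⁿ and ∫_{ℝⁿ} v(y₁)/(ε² y₁² + ε^{−2/(n−1)} |ȳ|²)^{(n+2s)/2} dy = C₂·ε^{−2s}·∫_ℝ v(y₁)/|y₁|^{1+2s} dy₁, where C₂ = ω_{n−1}·Γ((n−1)/2)·Γ(s + 1/2)/(2·Γ(n/2 + s)). -/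
open MeasureTheory

/-!
Integrate first over `ȳ`. With `d = n - 1` and `p = (n + 2s)/2`, writing `x⁻ᵖ` as a Gamma integral
`Γ(p)⁻¹ ∫₀^∞ u^(p-1) e^(-xu) du` turns `∫ (a + b|ȳ|²)⁻ᵖ dȳ` into a Gaussian integral followed by a
second Gamma integral, with value `π^(d/2) Γ(p - d/2) / Γ(p) · a^(d/2-p) b^(-d/2)`. For `a = ε² y₁²`
and `b = ε^(-2/d)` this is `C₂ ε^(-2s) |y₁|^(-1-2s)`, and Fubini's theorem concludes.
-/

open Module Real Set

section Fubini

variable {α β E : Type*} [MeasurableSpace α] [MeasurableSpace β] {μ : Measure α} {ν : Measure β}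
  [SFinite ν] [NormedAddCommGroup E] [NormedSpace ℝ E] {k : α × β → ℝ} {v : α → E}

lemma integrable_prod_smul_fst (hk : AEStronglyMeasurable k (μ.prod ν)) (hk_nonneg : 0 ≤ k)
    (hk_slice : ∀ᵐ t ∂μ, Integrable (fun z => k (t, z)) ν) (hv : AEStronglyMeasurable v μ)
    (hkv : Integrable (fun t => (∫ z, k (t, z) ∂ν) • v t) μ) :
    Integrable (fun y => k y • v y.1) (μ.prod ν) := by
  have h_meas : AEStronglyMeasurable (fun y => k y • v y.1) (μ.prod ν) := hk.smul hv.comp_fst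
  refine (integrable_prod_iff h_meas).2 ⟨?_, hkv.norm.congr ?_⟩
  · filter_upwards [hk_slice] with t ht using ht.smul_const (v t)
  · have h_norm (y : α × β) : ‖k y‖ = k y := norm_of_nonneg (hk_nonneg y)
    filter_upwards with t
    rw [norm_smul, norm_of_nonneg (integral_nonneg fun z => hk_nonneg (t, z))]
    simp_rw [norm_smul, h_norm, integral_mul_const]

lemma integral_prod_smul_fst [SFinite μ] [CompleteSpace E]
    (hkv : Integrable (fun y => k y • v y.1) (μ.prod ν)) :
    ∫ y, k y • v y.1 ∂(μ.prod ν) = ∫ t, (∫ z, k (t, z) ∂ν) • v t ∂μ := by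
  simp_rw [integral_prod _ hkv, integral_smul_const]

end Fubini

section Gamma

lemma lintegral_rpow_mul_exp_neg_mul_Ioi {p r : ℝ} (hp : 0 < p) (hr : 0 < r) :
    ∫⁻ u in Ioi 0, ENNReal.ofReal (u ^ (p - 1) * exp (-(r * u))) =
      ENNReal.ofReal ((1 / r) ^ p * Gamma p) := by
  have h_integrable : IntegrableOn (fun u => u ^ (p - 1) * exp (-(r * u))) (Ioi 0) := by
    simpa using integrableOn_rpow_mul_exp_neg_mul_rpow (by linarith : -1 < p - 1) one_pos hr
  rw [← integral_rpow_mul_exp_neg_mul_Ioi hp hr, ofReal_integral_eq_lintegral_ofReal h_integrable]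
  filter_upwards [self_mem_ae_restrict measurableSet_Ioi] with u hu
  exact mul_nonneg (rpow_nonneg (le_of_lt hu) _) (exp_nonneg _)

lemma ofReal_inv_rpow_eq_lintegral {p x : ℝ} (hp : 0 < p) (hx : 0 < x) :
    ENNReal.ofReal (x ^ p)⁻¹ = ENNReal.ofReal (Gamma p)⁻¹ *
      ∫⁻ u in Ioi 0, ENNReal.ofReal (u ^ (p - 1) * exp (-(x * u))) := by
  have hΓ := Gamma_pos_of_pos hp
  rw [lintegral_rpow_mul_exp_neg_mul_Ioi hp hx, ← ENNReal.ofReal_mul (by positivity), one_div,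
    inv_rpow hx.le, mul_comm, mul_inv_cancel_right₀ hΓ.ne']

end Gamma

/-- The total mass `∫ (1 + ‖z‖²)⁻ᵖ dz` over a Euclidean space of dimension `d`, in closed form;
it is meant for `d / 2 < p`, where the integral converges. -/
noncomputable def bracketMass (d : ℕ) (p : ℝ) : ℝ :=
  π ^ ((d : ℝ) / 2) * Gamma (p - d / 2) / Gamma p

lemma bracketMass_nonneg {d : ℕ} {p : ℝ} (hp : (d : ℝ) / 2 < p) : 0 ≤ bracketMass d p := by
  have hp_nonneg : 0 ≤ p := (by positivity : (0 : ℝ) ≤ d / 2).trans hp.le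
  exact div_nonneg (mul_nonneg (by positivity) (Gamma_nonneg_of_nonneg (sub_nonneg.2 hp.le)))
    (Gamma_nonneg_of_nonneg hp_nonneg)

lemma C2_eq_bracketMass {n : ℕ} (hn : 2 ≤ n) (s : ℝ) :
    C2 n s = bracketMass (n - 1) ((n + 2 * s) / 2) := by
  obtain ⟨d, rfl⟩ : ∃ d, n = d + 1 := ⟨n - 1, by omega⟩
  have hd : (0 : ℝ) < d := by exact_mod_cast (by omega : 0 < d)
  have hΓ := (Gamma_pos_of_pos (half_pos hd)).ne'
  unfold C2 surfOmega bracketMass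
  simp only [Nat.add_sub_cancel, Nat.cast_add, Nat.cast_one, add_sub_cancel_right]
  rw [show ((d : ℝ) + 1 + 2 * s) / 2 - d / 2 = s + 1 / 2 by ring,
    show ((d : ℝ) + 1 + 2 * s) / 2 = (d + 1) / 2 + s by ring]
  field_simp

section Bracket

variable {V : Type*} [NormedAddCommGroup V] [InnerProductSpace ℝ V] [FiniteDimensional ℝ V]
  [MeasurableSpace V] [BorelSpace V] {a b p : ℝ}

lemma lintegral_exp_neg_mul_norm_sq (hb : 0 < b) :
    ∫⁻ z : V, ENNReal.ofReal (exp (-b * ‖z‖ ^ 2)) =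
      ENNReal.ofReal ((π / b) ^ (finrank ℝ V / 2 : ℝ)) := by
  have h_integral := GaussianFourier.integral_rexp_neg_mul_sq_norm (V := V) hb
  have h_integrable : Integrable fun z : V => exp (-b * ‖z‖ ^ 2) :=
    .of_integral_ne_zero (by rw [h_integral]; positivity)
  rw [← h_integral, ofReal_integral_eq_lintegral_ofReal h_integrable]
  exact .of_forall fun z => exp_nonneg _

lemma lintegral_rpow_mul_exp_neg_add_mul_norm_sq_mul {u : ℝ} (hb : 0 < b) (hu : 0 < u) :
    ∫⁻ z : V, ENNReal.ofReal (u ^ (p - 1) * exp (-((a + b * ‖z‖ ^ 2) * u))) =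
      ENNReal.ofReal ((π / b) ^ (finrank ℝ V / 2 : ℝ)) *
        ENNReal.ofReal (u ^ (p - finrank ℝ V / 2 - 1) * exp (-(a * u))) := by
  have h_split (z : V) : ENNReal.ofReal (u ^ (p - 1) * exp (-((a + b * ‖z‖ ^ 2) * u))) =
      ENNReal.ofReal (u ^ (p - 1) * exp (-(a * u))) *
        ENNReal.ofReal (exp (-(b * u) * ‖z‖ ^ 2)) := by
    rw [← ENNReal.ofReal_mul (by positivity), mul_assoc, ← exp_add]
    ring_nf
  simp_rw [h_split]
  rw [lintegral_const_mul' _ _ ENNReal.ofReal_ne_top, lintegral_exp_neg_mul_norm_sq (by positivity),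
    ← ENNReal.ofReal_mul (by positivity), ← ENNReal.ofReal_mul (by positivity), sub_right_comm,
    rpow_sub hu (p - 1), ← div_div, div_rpow (by positivity) hu.le]
  ring_nf

lemma lintegral_inv_rpow_add_mul_norm_sq (ha : 0 < a) (hb : 0 < b)
    (hp : (finrank ℝ V : ℝ) / 2 < p) :
    ∫⁻ z : V, ENNReal.ofReal ((a + b * ‖z‖ ^ 2) ^ p)⁻¹ =
      ENNReal.ofReal (bracketMass (finrank ℝ V) p *
        a ^ ((finrank ℝ V : ℝ) / 2 - p) * b ^ (-((finrank ℝ V : ℝ) / 2))) := by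
  have hp_pos : 0 < p := (by positivity : (0 : ℝ) ≤ finrank ℝ V / 2).trans_lt hp
  have hΓ_inv : 0 ≤ (Gamma p)⁻¹ := inv_nonneg.2 (Gamma_pos_of_pos hp_pos).le
  have h_meas : Measurable fun y : V × ℝ =>
      ENNReal.ofReal (y.2 ^ (p - 1) * exp (-((a + b * ‖y.1‖ ^ 2) * y.2))) := by fun_prop
  calc ∫⁻ z : V, ENNReal.ofReal ((a + b * ‖z‖ ^ 2) ^ p)⁻¹
    _ = ENNReal.ofReal (Gamma p)⁻¹ * ∫⁻ z : V, ∫⁻ u in Ioi 0,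
          ENNReal.ofReal (u ^ (p - 1) * exp (-((a + b * ‖z‖ ^ 2) * u))) := by
      rw [← lintegral_const_mul' _ _ ENNReal.ofReal_ne_top]
      exact lintegral_congr fun z => ofReal_inv_rpow_eq_lintegral hp_pos (by positivity)
    _ = ENNReal.ofReal (Gamma p)⁻¹ * ∫⁻ u in Ioi 0, ∫⁻ z : V,
          ENNReal.ofReal (u ^ (p - 1) * exp (-((a + b * ‖z‖ ^ 2) * u))) := by
      rw [lintegral_lintegral_swap h_meas.aemeasurable]
    _ = ENNReal.ofReal (Gamma p)⁻¹ * (ENNReal.ofReal ((π / b) ^ (finrank ℝ V / 2 : ℝ)) *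
          ENNReal.ofReal ((1 / a) ^ (p - finrank ℝ V / 2) * Gamma (p - finrank ℝ V / 2))) := by
      rw [setLIntegral_congr_fun measurableSet_Ioi fun u hu =>
          lintegral_rpow_mul_exp_neg_add_mul_norm_sq_mul hb hu,
        lintegral_const_mul' _ _ ENNReal.ofReal_ne_top,
        lintegral_rpow_mul_exp_neg_mul_Ioi (sub_pos.2 hp) ha]
    _ = _ := by
      rw [← ENNReal.ofReal_mul (by positivity), ← ENNReal.ofReal_mul hΓ_inv,
        div_rpow pi_nonneg hb.le, one_div, inv_rpow ha.le, ← rpow_neg ha.le, neg_sub,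
        rpow_neg hb.le, bracketMass]
      ring_nf

lemma integrable_inv_rpow_add_mul_norm_sq (ha : 0 < a) (hb : 0 < b)
    (hp : (finrank ℝ V : ℝ) / 2 < p) :
    Integrable fun z : V => ((a + b * ‖z‖ ^ 2) ^ p)⁻¹ := by
  have h_meas : Measurable fun z : V => ((a + b * ‖z‖ ^ 2) ^ p)⁻¹ := by fun_prop
  refine (lintegral_ofReal_ne_top_iff_integrable h_meas.aestronglyMeasurable
    (.of_forall fun z => by positivity)).1 ?_
  rw [lintegral_inv_rpow_add_mul_norm_sq ha hb hp]
  exact ENNReal.ofReal_ne_top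

lemma integral_inv_rpow_add_mul_norm_sq (ha : 0 < a) (hb : 0 < b)
    (hp : (finrank ℝ V : ℝ) / 2 < p) :
    ∫ z : V, ((a + b * ‖z‖ ^ 2) ^ p)⁻¹ = bracketMass (finrank ℝ V) p *
      a ^ ((finrank ℝ V : ℝ) / 2 - p) * b ^ (-((finrank ℝ V : ℝ) / 2)) := by
  have h_meas : Measurable fun z : V => ((a + b * ‖z‖ ^ 2) ^ p)⁻¹ := by fun_prop
  have h_mass := bracketMass_nonneg hp
  rw [integral_eq_lintegral_of_nonneg_ae (.of_forall fun z => by positivity)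
      h_meas.aestronglyMeasurable,
    lintegral_inv_rpow_add_mul_norm_sq ha hb hp, ENNReal.toReal_ofReal (by positivity)]

lemma integral_inv_rpow_mul_sq_add_mul_norm_sq {t : ℝ} (ht : t ≠ 0) (ha : 0 < a) (hb : 0 < b)
    (hp : (finrank ℝ V : ℝ) / 2 < p) :
    ∫ z : V, ((a * t ^ 2 + b * ‖z‖ ^ 2) ^ p)⁻¹ = bracketMass (finrank ℝ V) p *
      a ^ ((finrank ℝ V : ℝ) / 2 - p) * b ^ (-((finrank ℝ V : ℝ) / 2)) *
        (|t| ^ (2 * p - finrank ℝ V))⁻¹ := by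
  have h_pow : (t ^ 2) ^ ((finrank ℝ V : ℝ) / 2 - p) = (|t| ^ (2 * p - finrank ℝ V))⁻¹ := by
    rw [← sq_abs, ← rpow_natCast_mul (abs_nonneg t), ← rpow_neg (abs_nonneg t)]
    congr 1
    push_cast
    ring
  rw [integral_inv_rpow_add_mul_norm_sq (by positivity) hb hp, mul_rpow ha.le (sq_nonneg t), h_pow]
  ring

variable {E : Type*} [NormedAddCommGroup E] [NormedSpace ℝ E] {v : ℝ → E}

lemma aestronglyMeasurable_of_integrable_inv_abs_rpow_smul {q : ℝ}
    (hv : Integrable fun t : ℝ => (|t| ^ q)⁻¹ • v t) : AEStronglyMeasurable v := by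
  have h_meas : Measurable fun t : ℝ => |t| ^ q := by fun_prop
  refine (h_meas.aestronglyMeasurable.smul hv.aestronglyMeasurable).congr ?_
  filter_upwards [Measure.ae_ne volume 0] with t ht
  have : |t| ^ q ≠ 0 := (rpow_pos_of_pos (abs_pos.2 ht) q).ne'
  exact smul_inv_smul₀ this (v t)

lemma integral_bracket_smul_ae_eq (ha : 0 < a) (hb : 0 < b) (hp : (finrank ℝ V : ℝ) / 2 < p) :
    (fun t : ℝ => (∫ z : V, ((a * t ^ 2 + b * ‖z‖ ^ 2) ^ p)⁻¹) • v t) =ᵐ[volume]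
      fun t => (bracketMass (finrank ℝ V) p * a ^ ((finrank ℝ V : ℝ) / 2 - p) *
        b ^ (-((finrank ℝ V : ℝ) / 2))) • (|t| ^ (2 * p - finrank ℝ V))⁻¹ • v t := by
  filter_upwards [Measure.ae_ne volume 0] with t ht
  rw [integral_inv_rpow_mul_sq_add_mul_norm_sq ht ha hb hp, mul_smul]

lemma integrable_prod_bracket_smul (ha : 0 < a) (hb : 0 < b) (hp : (finrank ℝ V : ℝ) / 2 < p)
    (hv : Integrable fun t : ℝ => (|t| ^ (2 * p - finrank ℝ V))⁻¹ • v t) :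
    Integrable fun y : ℝ × V => ((a * y.1 ^ 2 + b * ‖y.2‖ ^ 2) ^ p)⁻¹ • v y.1 := by
  have h_meas : Measurable fun y : ℝ × V => ((a * y.1 ^ 2 + b * ‖y.2‖ ^ 2) ^ p)⁻¹ := by fun_prop
  refine integrable_prod_smul_fst h_meas.aestronglyMeasurable (fun y => by positivity) ?_
    (aestronglyMeasurable_of_integrable_inv_abs_rpow_smul hv)
    ((hv.smul _).congr (integral_bracket_smul_ae_eq ha hb hp).symm)
  filter_upwards [Measure.ae_ne volume 0] with t ht
  exact integrable_inv_rpow_add_mul_norm_sq (by positivity) hb hp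

lemma integral_prod_bracket_smul [CompleteSpace E] (ha : 0 < a) (hb : 0 < b)
    (hp : (finrank ℝ V : ℝ) / 2 < p)
    (hv : Integrable fun t : ℝ => (|t| ^ (2 * p - finrank ℝ V))⁻¹ • v t) :
    ∫ y : ℝ × V, ((a * y.1 ^ 2 + b * ‖y.2‖ ^ 2) ^ p)⁻¹ • v y.1 =
      (bracketMass (finrank ℝ V) p * a ^ ((finrank ℝ V : ℝ) / 2 - p) *
        b ^ (-((finrank ℝ V : ℝ) / 2))) • ∫ t : ℝ, (|t| ^ (2 * p - finrank ℝ V))⁻¹ • v t := by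
  rw [Measure.volume_eq_prod,
    integral_prod_smul_fst (integrable_prod_bracket_smul ha hb hp hv),
    integral_congr_ae (integral_bracket_smul_ae_eq ha hb hp), integral_smul]

end Bracket

lemma sq_rpow_mul_rpow_neg_two_div_rpow {ε d : ℝ} (hε : 0 < ε) (hd : d ≠ 0) (p : ℝ) :
    (ε ^ 2) ^ (d / 2 - p) * (ε ^ (-2 / d)) ^ (-(d / 2)) = ε ^ (d + 1 - 2 * p) := by
  rw [← rpow_natCast_mul hε.le, ← rpow_mul hε.le, ← rpow_add hε]
  congr 1
  push_cast
  field_simp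
  ring

section Splitting

variable {d : ℕ}

/-- The splitting `y ↦ (yᵢ, ȳ)` of Euclidean space into its `i`-th coordinate and the vector of the
remaining ones, through which Fubini's theorem is applied. The product is taken with the sup norm,
so this is not an isometry. -/
noncomputable def splitCoord (i : Fin (d + 1)) :
    EuclideanSpace ℝ (Fin (d + 1)) ≃ᵐ ℝ × EuclideanSpace ℝ (Fin d) :=
  (MeasurableEquiv.toLp 2 (Fin (d + 1) → ℝ)).symm.trans <|
    (MeasurableEquiv.piFinSuccAbove (fun _ => ℝ) i).trans <|
      (MeasurableEquiv.refl ℝ).prodCongr (MeasurableEquiv.toLp 2 (Fin d → ℝ))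

lemma measurePreserving_splitCoord (i : Fin (d + 1)) : MeasurePreserving (splitCoord i) :=
  ((MeasurePreserving.id volume).prod (PiLp.volume_preserving_toLp (Fin d))).comp <|
    (volume_preserving_piFinSuccAbove (fun _ => ℝ) i).comp
      (PiLp.volume_preserving_ofLp (Fin (d + 1)))

lemma splitCoord_fst (i : Fin (d + 1)) (y : EuclideanSpace ℝ (Fin (d + 1))) :
    (splitCoord i y).1 = y i :=
  rfl

lemma norm_sq_splitCoord_snd (i : Fin (d + 1)) (y : EuclideanSpace ℝ (Fin (d + 1))) :
    ‖(splitCoord i y).2‖ ^ 2 = ∑ j ∈ Finset.univ.erase i, y j ^ 2 := by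
  rw [Finset.sum_erase_eq_sub (Finset.mem_univ i), Fin.sum_univ_succAbove _ i, add_sub_cancel_left,
    EuclideanSpace.real_norm_sq_eq]
  rfl

end Splitting

theorem stmt4_general {E : Type*} [NormedAddCommGroup E] [NormedSpace ℝ E] [CompleteSpace E]
    {n : ℕ} (hn : 2 ≤ n) (i : Fin n) {s ε : ℝ} (hs : -1 / 2 < s) (hε : 0 < ε) {v : ℝ → E}
    (hv : Integrable fun t : ℝ => (|t| ^ (1 + 2 * s))⁻¹ • v t) :
    Integrable (fun y : EuclideanSpace ℝ (Fin n) =>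
      ((ε ^ 2 * y i ^ 2 + ε ^ (-2 / ((n : ℝ) - 1)) * ∑ j ∈ Finset.univ.erase i, y j ^ 2) ^
        (((n : ℝ) + 2 * s) / 2))⁻¹ • v (y i)) ∧
    ∫ y : EuclideanSpace ℝ (Fin n),
      ((ε ^ 2 * y i ^ 2 + ε ^ (-2 / ((n : ℝ) - 1)) * ∑ j ∈ Finset.univ.erase i, y j ^ 2) ^
        (((n : ℝ) + 2 * s) / 2))⁻¹ • v (y i) =
      (C2 n s * ε ^ (-(2 * s))) • ∫ t : ℝ, (|t| ^ (1 + 2 * s))⁻¹ • v t := by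
  obtain ⟨d, rfl⟩ : ∃ d, n = d + 1 := ⟨n - 1, by omega⟩
  have hd : (d : ℝ) ≠ 0 := by exact_mod_cast (by omega : d ≠ 0)
  set p : ℝ := (((d + 1 : ℕ) : ℝ) + 2 * s) / 2 with hp_def
  have hp_two : 2 * p - d = 1 + 2 * s := by rw [hp_def]; push_cast; ring
  have hp : (finrank ℝ (EuclideanSpace ℝ (Fin d)) : ℝ) / 2 < p := by
    rw [finrank_euclideanSpace_fin]; linarith
  have hb : 0 < ε ^ (-2 / (d : ℝ)) := rpow_pos_of_pos hε _
  have h_const : bracketMass d p * (ε ^ 2) ^ ((d : ℝ) / 2 - p) *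
      (ε ^ (-2 / (d : ℝ))) ^ (-((d : ℝ) / 2)) = C2 (d + 1) s * ε ^ (-(2 * s)) := by
    rw [C2_eq_bracketMass hn, Nat.add_sub_cancel, mul_assoc,
      sq_rpow_mul_rpow_neg_two_div_rpow hε hd, show (d : ℝ) + 1 - 2 * p = -(2 * s) by linarith]
  rw [← hp_two, ← finrank_euclideanSpace_fin (𝕜 := ℝ) (n := d)] at hv
  have h_integrable := integrable_prod_bracket_smul (pow_pos hε 2) hb hp hv
  have h_integral := integral_prod_bracket_smul (pow_pos hε 2) hb hp hv
  rw [← (measurePreserving_splitCoord i).integrable_comp_emb (splitCoord i).measurableEmbedding]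
    at h_integrable
  rw [← (measurePreserving_splitCoord i).integral_comp (splitCoord i).measurableEmbedding]
    at h_integral
  simp only [Function.comp_def, splitCoord_fst, norm_sq_splitCoord_snd, finrank_euclideanSpace_fin,
    hp_two, h_const] at h_integrable h_integral
  simpa only [Nat.cast_add, Nat.cast_one, add_sub_cancel_right]
    using And.intro h_integrable h_integral

theorem stmt4 (n : ℕ) (hn : 2 ≤ n) (s ε : ℝ) (hs0 : 0 < s) (hs1 : s < 1) (hε : 0 < ε)
    (v : ℝ → ℝ) (hmeas : Measurable v)
    (hint : Integrable (fun t : ℝ => v t / |t| ^ (1 + 2 * s))) :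
    Integrable (fun y : EuclideanSpace ℝ (Fin n) =>
      v (y ⟨0, by omega⟩) /
        (ε ^ 2 * y (⟨0, by omega⟩ : Fin n) ^ 2 +
          ε ^ (-2 / ((n : ℝ) - 1)) * ∑ j ∈ Finset.univ.erase (⟨0, by omega⟩ : Fin n), y j ^ 2) ^
          (((n : ℝ) + 2 * s) / 2)) ∧
    (∫ y : EuclideanSpace ℝ (Fin n),
      v (y ⟨0, by omega⟩) /
        (ε ^ 2 * y (⟨0, by omega⟩ : Fin n) ^ 2 +
          ε ^ (-2 / ((n : ℝ) - 1)) * ∑ j ∈ Finset.univ.erase (⟨0, by omega⟩ : Fin n), y j ^ 2) ^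
          (((n : ℝ) + 2 * s) / 2)) =
      C2 n s * ε ^ (-(2 * s)) * ∫ t : ℝ, v t / |t| ^ (1 + 2 * s) := by
  simp only [div_eq_inv_mul (v _)] at hint ⊢
  exact stmt4_general hn ⟨0, by omega⟩ (by linarith) hε hint
end
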